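/- arXiv:2412.04817 — 9 statements merged into one kernel-verified Lean document; each statement's English description precedes it below -/
import Mathlib

section
/- Let n > 6 and let A be a non-unital associative ℂ-algebra with basis e₁, …, eₙ such that: e₁·eᵢ = e_{i+1} for 1 ≤ i ≤ n−4, e₁·e_{n−3} = 0, e₁·e_{n−2} = e_{n−1}, e₁·e_{n−1} = 0, e₁·eₙ = 0; each of the six products e_{n−2}·e₁, e_{n−2}·e_{n−2}, e_{n−2}·eₙ, eₙ·e₁, eₙ·e_{n−2}, eₙ·eₙ lies in span{e₂, e_{n−1}}; and each of the four products e_{n−2}·e₂, e_{n−2}·e_{n−1}, eₙ·e₂, eₙ·e_{n−1} lies in span{e₃}. Then in fact e_{n−2}·e₁, e_{n−2}·e_{n−2}, e_{n−2}·eₙ, eₙ·e₁, eₙ·e_{n−2}, eₙ·eₙ all lie in span{e_{n−1}}; e_{n−2}·eᵢ = eₙ·eᵢ = 0 for all 2 ≤ i ≤ n−3; e_{n−2}·e_{n−1} = eₙ·e_{n−1} = 0; and e_{n−1}·e₁ = e_{n−1}·e_{n−2} = e_{n−1}·e_{n−1} = e_{n−1}·eₙ = 0 as well as e_{n−1}·eᵢ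 = 0 for 2 ≤ i ≤ n−3. Consequently A is isomorphic to the algebra A(α₁,α₂,α₃,α₄,α₅,α₆) for suitable scalars α₁,…,α₆ ∈ ℂ. -/
/-!
Write `u = e_{n-2}`, `v = e_{n-1}`, `w = e_n`. Everything follows from associativity with powers
of `e₁`, since `e₁ u = v`, `e₁ v = 0` and `e₁ w = 0`. For every `z` one has
`e₁ (e₁ (u z)) = (e₁ v) z = 0` and `e₁ (e₁ (w z)) = 0`, whereas
`e₁ (e₁ (a e₂ + b v)) = a e₄` because `4 ≤ n - 3`, and `e₄ ≠ 0`. So each of the six products,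
being in `span {e₂, v}`, is in `span {v}` (`mem_span_of_mul_mul_eq_zero`). Hence `e₁` annihilates
`u e₁`, `u u`, `u w`, that is, `v e₁ = v u = v w = 0`. Since `e_i = e₁^i` for `i ≤ n - 3`
(`chain_mul`), every remaining product with `u`, `v` or `w` factors through one of these or through
`e₁ v = e₁ w = 0`, and so vanishes. The multiplication table is then that of `A(α)`, where `α`
lists the coefficients of the six products along `v`, and the coordinate map of the basis
`e₁, …, e_n` is the isomorphism (`equivFun_mul`).
-/

/-- The `m`-th standard basis vector of `Fin n → ℂ` (0-based index). -/
noncomputable def bvec (n : ℕ) (m : ℕ) (h : m < n) : Fin n → ℂ :=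
  Pi.single (⟨m, h⟩ : Fin n) (1 : ℂ)

/-- Structure constants of the algebra `A(α₁,…,α₆)` on basis vectors.
Index `i : Fin n` represents the basis vector `e_{i+1}` of the paper. -/
noncomputable def Abasis (n : ℕ) (α : Fin 6 → ℂ) (i j : Fin n) : Fin n → ℂ :=
  if h : i.1 + j.1 + 2 ≤ n - 3 then
    bvec n (i.1 + j.1 + 1) (by omega)
  else if i.1 = 0 ∧ j.1 = n - 3 then
    bvec n (n - 2) (by have := i.2; omega)
  else if i.1 = n - 3 ∧ j.1 = 0 then
    α 0 • bvec n (n - 2) (by have := i.2; omega)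
  else if i.1 = n - 3 ∧ j.1 = n - 3 then
    α 1 • bvec n (n - 2) (by have := i.2; omega)
  else if i.1 = n - 3 ∧ j.1 = n - 1 then
    α 2 • bvec n (n - 2) (by have := i.2; omega)
  else if i.1 = n - 1 ∧ j.1 = 0 then
    α 3 • bvec n (n - 2) (by have := i.2; omega)
  else if i.1 = n - 1 ∧ j.1 = n - 3 then
    α 4 • bvec n (n - 2) (by have := i.2; omega)
  else if i.1 = n - 1 ∧ j.1 = n - 1 then
    α 5 • bvec n (n - 2) (by have := i.2; omega)
  else 0

/-- The bilinear multiplication of the algebra `A(α₁,…,α₆)` on `Fin n → ℂ`. -/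
noncomputable def Amul (n : ℕ) (α : Fin 6 → ℂ) (x y : Fin n → ℂ) : Fin n → ℂ :=
  ∑ i : Fin n, ∑ j : Fin n, (x i * y j) • Abasis n α i j

/-- `A(α) ≅ A(α')` as non-unital `ℂ`-algebras. -/
def AIso (n : ℕ) (α α' : Fin 6 → ℂ) : Prop :=
  ∃ φ : (Fin n → ℂ) ≃ₗ[ℂ] (Fin n → ℂ),
    ∀ x y : Fin n → ℂ, φ (Amul n α x y) = Amul n α' (φ x) (φ y)

section

variable {A : Type*} [NonUnitalRing A]

/-- The multiplication table of the chain `e₁, …, e_{n-3}`: it consists of powers of `e₁`, with `e₁^{n-2} = 0`. -/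
theorem chain_mul (n : ℕ) (hn : 6 < n) (e : ℕ → A)
    (h1 : ∀ i : ℕ, 1 ≤ i → i ≤ n - 4 → e 1 * e i = e (i + 1))
    (h2 : e 1 * e (n - 3) = 0) (i j : ℕ) (hi : 1 ≤ i) (hi' : i ≤ n - 3)
    (hj : 1 ≤ j) (hj' : j ≤ n - 3) :
    e i * e j = if i + j ≤ n - 3 then e (i + j) else 0 := by
  induction i, hi using Nat.le_induction with
  | base =>
    split_ifs with h
    · rw [h1 j hj (by omega), add_comm]
    · rw [show j = n - 3 by omega, h2]
  | succ i hi ih =>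
    rw [← h1 i hi (by omega), mul_assoc, ih (by omega)]
    split_ifs with h h' h'
    · rw [h1 _ (by omega) (by omega)]
      congr 1
      omega
    · rw [show i + j = n - 3 by omega, h2]
    · omega
    · rw [mul_zero]

/-- An element killed by `e₁` on the left is killed by the whole chain `e₁, …, e_{n-3}`. -/
theorem chain_mul_eq_zero (n : ℕ) (e : ℕ → A)
    (h1 : ∀ i : ℕ, 1 ≤ i → i ≤ n - 4 → e 1 * e i = e (i + 1))
    (z : A) (hz : e 1 * z = 0) (i : ℕ) (hi : 1 ≤ i) (hi' : i ≤ n - 3) :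
    e i * z = 0 := by
  induction i, hi using Nat.le_induction with
  | base => exact hz
  | succ i hi ih => rw [← h1 i hi (by omega), mul_assoc, ih (by omega), mul_zero]

/-- If `e₁² x = 0` then the `e₂`-component of `x ∈ span {e₂, v}` vanishes, since `e₁² e₂ = e₄`. -/
theorem mem_span_of_mul_mul_eq_zero [Module ℂ A] [SMulCommClass ℂ A A]
    {e₁ e₂ e₄ v x : A} (h24 : e₁ * (e₁ * e₂) = e₄) (h4 : e₄ ≠ 0) (hv : e₁ * v = 0)
    (hx : x ∈ Submodule.span ℂ {e₂, v}) (h : e₁ * (e₁ * x) = 0) :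
    ∃ b : ℂ, x = b • v := by
  obtain ⟨a, b, rfl⟩ := Submodule.mem_span_pair.1 hx
  simp only [mul_add, mul_smul_comm, hv, h24, smul_zero, add_zero] at h
  exact ⟨b, by simp [(smul_eq_zero.1 h).resolve_right h4]⟩

end

/-- A basis whose multiplication table is `Abasis n α` identifies the algebra with `A(α)`. -/
theorem equivFun_mul {A : Type*} [NonUnitalRing A] [Module ℂ A] [SMulCommClass ℂ A A]
    [IsScalarTower ℂ A A] (n : ℕ) (α : Fin 6 → ℂ) (b : Module.Basis (Fin n) ℂ A)
    (h : ∀ i j, b.equivFun (b i * b j) = Abasis n α i j) (x y : A) :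
    b.equivFun (x * y) = Amul n α (b.equivFun x) (b.equivFun y) := by
  conv_lhs => rw [← b.sum_equivFun x, ← b.sum_equivFun y]
  simp only [Finset.sum_mul_sum, map_sum, smul_mul_smul_comm, map_smul, h, Amul]

/-- Let `n > 6` and let `A` be a non-unital associative `ℂ`-algebra with
basis `e₁, …, eₙ` adapted to `L_{e₁}` (Jordan blocks of sizes `n-3, 2, 1`), such that the
six products `e_{n-2}e₁, e_{n-2}e_{n-2}, e_{n-2}eₙ, eₙe₁, eₙe_{n-2}, eₙeₙ` lie in
`span{e₂, e_{n-1}}` and the four products `e_{n-2}e₂, e_{n-2}e_{n-1}, eₙe₂, eₙe_{n-1}`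
lie in `span{e₃}`.  Then the six products actually lie in `span{e_{n-1}}`, all the other
listed products vanish, and `A` is isomorphic to `A(α₁,…,α₆)` for suitable `αᵢ ∈ ℂ`. -/
theorem case_r1_r2_one (n : ℕ) (hn : 6 < n) {A : Type*} [NonUnitalRing A] [Module ℂ A]
    [SMulCommClass ℂ A A] [IsScalarTower ℂ A A] (e : ℕ → A)
    (hli : LinearIndependent ℂ (fun i : Fin n => e (i.1 + 1)))
    (hsp : Submodule.span ℂ (Set.range fun i : Fin n => e (i.1 + 1)) = ⊤)
    (h1 : ∀ i : ℕ, 1 ≤ i → i ≤ n - 4 → e 1 * e i = e (i + 1))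
    (h2 : e 1 * e (n - 3) = 0)
    (h3 : e 1 * e (n - 2) = e (n - 1))
    (h4 : e 1 * e (n - 1) = 0)
    (h5 : e 1 * e n = 0)
    (g1 : e (n - 2) * e 1 ∈ Submodule.span ℂ {e 2, e (n - 1)})
    (g2 : e (n - 2) * e (n - 2) ∈ Submodule.span ℂ {e 2, e (n - 1)})
    (g3 : e (n - 2) * e n ∈ Submodule.span ℂ {e 2, e (n - 1)})
    (g4 : e n * e 1 ∈ Submodule.span ℂ {e 2, e (n - 1)})
    (g5 : e n * e (n - 2) ∈ Submodule.span ℂ {e 2, e (n - 1)})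
    (g6 : e n * e n ∈ Submodule.span ℂ {e 2, e (n - 1)})
    (g7 : e (n - 2) * e 2 ∈ Submodule.span ℂ ({e 3} : Set A))
    (g8 : e (n - 2) * e (n - 1) ∈ Submodule.span ℂ ({e 3} : Set A))
    (g9 : e n * e 2 ∈ Submodule.span ℂ ({e 3} : Set A))
    (g10 : e n * e (n - 1) ∈ Submodule.span ℂ ({e 3} : Set A)) :
    e (n - 2) * e 1 ∈ Submodule.span ℂ ({e (n - 1)} : Set A) ∧
    e (n - 2) * e (n - 2) ∈ Submodule.span ℂ ({e (n - 1)} : Set A) ∧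
    e (n - 2) * e n ∈ Submodule.span ℂ ({e (n - 1)} : Set A) ∧
    e n * e 1 ∈ Submodule.span ℂ ({e (n - 1)} : Set A) ∧
    e n * e (n - 2) ∈ Submodule.span ℂ ({e (n - 1)} : Set A) ∧
    e n * e n ∈ Submodule.span ℂ ({e (n - 1)} : Set A) ∧
    (∀ i : ℕ, 2 ≤ i → i ≤ n - 3 → e (n - 2) * e i = 0 ∧ e n * e i = 0) ∧
    e (n - 2) * e (n - 1) = 0 ∧ e n * e (n - 1) = 0 ∧
    e (n - 1) * e 1 = 0 ∧ e (n - 1) * e (n - 2) = 0 ∧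
    e (n - 1) * e (n - 1) = 0 ∧ e (n - 1) * e n = 0 ∧
    (∀ i : ℕ, 2 ≤ i → i ≤ n - 3 → e (n - 1) * e i = 0) ∧
    ∃ α : Fin 6 → ℂ, ∃ φ : A ≃ₗ[ℂ] (Fin n → ℂ),
      ∀ x y : A, φ (x * y) = Amul n α (φ x) (φ y) := by
  have h24 : e 1 * (e 1 * e 2) = e 4 := by
    rw [h1 2 (by omega) (by omega), h1 3 (by omega) (by omega)]
  have e4 : e 4 ≠ 0 := hli.ne_zero (⟨3, by omega⟩ : Fin n)
  have ku (z : A) : e 1 * (e 1 * (e (n - 2) * z)) = 0 := by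
    rw [← mul_assoc (e 1) (e (n - 2)), h3, ← mul_assoc, h4, zero_mul]
  have kw (z : A) : e 1 * (e 1 * (e n * z)) = 0 := by
    rw [← mul_assoc (e 1) (e n), h5, zero_mul, mul_zero]
  obtain ⟨a0, q0⟩ := mem_span_of_mul_mul_eq_zero h24 e4 h4 g1 (ku _)
  obtain ⟨a1, q1⟩ := mem_span_of_mul_mul_eq_zero h24 e4 h4 g2 (ku _)
  obtain ⟨a2, q2⟩ := mem_span_of_mul_mul_eq_zero h24 e4 h4 g3 (ku _)
  obtain ⟨a3, q3⟩ := mem_span_of_mul_mul_eq_zero h24 e4 h4 g4 (kw _)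
  obtain ⟨a4, q4⟩ := mem_span_of_mul_mul_eq_zero h24 e4 h4 g5 (kw _)
  obtain ⟨a5, q5⟩ := mem_span_of_mul_mul_eq_zero h24 e4 h4 g6 (kw _)
  have v1 : e (n - 1) * e 1 = 0 := by
    rw [← h3, mul_assoc, q0, mul_smul_comm, h4, smul_zero]
  have vu : e (n - 1) * e (n - 2) = 0 := by
    nth_rw 1 [← h3]
    rw [mul_assoc, q1, mul_smul_comm, h4, smul_zero]
  have vw : e (n - 1) * e n = 0 := by
    rw [← h3, mul_assoc, q2, mul_smul_comm, h4, smul_zero]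
  have vv : e (n - 1) * e (n - 1) = 0 := by
    nth_rw 2 [← h3]
    rw [← mul_assoc, v1, zero_mul]
  have uv : e (n - 2) * e (n - 1) = 0 := by
    rw [← h3, ← mul_assoc, q0, smul_mul_assoc, vu, smul_zero]
  have wv : e n * e (n - 1) = 0 := by
    rw [← h3, ← mul_assoc, q3, smul_mul_assoc, vu, smul_zero]
  have vi (i : ℕ) (hi : 1 ≤ i) (hi' : i ≤ n - 3) : e (n - 1) * e i = 0 := by
    obtain rfl | hi := hi.eq_or_lt
    · exact v1
    · obtain ⟨k, rfl⟩ : ∃ k, i = k + 1 := ⟨i - 1, by omega⟩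
      rw [← h1 k (by omega) (by omega), ← mul_assoc, v1, zero_mul]
  have ui (i : ℕ) (hi : 2 ≤ i) (hi' : i ≤ n - 3) : e (n - 2) * e i = 0 := by
    obtain ⟨k, rfl⟩ : ∃ k, i = k + 1 := ⟨i - 1, by omega⟩
    rw [← h1 k (by omega) (by omega), ← mul_assoc, q0, smul_mul_assoc,
      vi k (by omega) (by omega), smul_zero]
  have wi (i : ℕ) (hi : 2 ≤ i) (hi' : i ≤ n - 3) : e n * e i = 0 := by
    obtain ⟨k, rfl⟩ : ∃ k, i = k + 1 := ⟨i - 1, by omega⟩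
    rw [← h1 k (by omega) (by omega), ← mul_assoc, q3, smul_mul_assoc,
      vi k (by omega) (by omega), smul_zero]
  have iu (i : ℕ) (hi : 2 ≤ i) (hi' : i ≤ n - 3) : e i * e (n - 2) = 0 := by
    obtain ⟨k, rfl⟩ : ∃ k, i = k + 1 := ⟨i - 1, by omega⟩
    -- `e_{k+1} = e_k e₁`
    have hk := chain_mul n hn e h1 h2 k 1 (by omega) (by omega) le_rfl (by omega)
    rw [if_pos hi'] at hk
    rw [← hk, mul_assoc, h3]
    exact chain_mul_eq_zero n e h1 _ h4 k (by omega) (by omega)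
  have iv := chain_mul_eq_zero n e h1 _ h4
  have iw := chain_mul_eq_zero n e h1 _ h5
  have sp {x : A} {b : ℂ} (h : x = b • e (n - 1)) :
      x ∈ Submodule.span ℂ ({e (n - 1)} : Set A) :=
    Submodule.mem_span_singleton.2 ⟨b, h.symm⟩
  refine ⟨sp q0, sp q1, sp q2, sp q3, sp q4, sp q5, fun i hi hi' => ⟨ui i hi hi', wi i hi hi'⟩,
    uv, wv, v1, vu, vv, vw, fun i hi hi' => vi i (by omega) hi', ?_⟩
  let b := Module.Basis.mk hli hsp.ge
  have hb (i : Fin n) : b i = e (i.1 + 1) := Module.Basis.mk_apply _ _ i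
  have hbv (m : ℕ) (hm : m < n) : b.equivFun (e (m + 1)) = bvec n m hm := by
    rw [← hb ⟨m, hm⟩, bvec]
    ext j
    simp [Module.Basis.equivFun_self, Pi.single_apply, eq_comm]
  have hv (a : ℂ) : b.equivFun (a • e (n - 1)) = a • bvec n (n - 2) (by omega) := by
    rw [map_smul, ← hbv (n - 2) (by omega), show n - 2 + 1 = n - 1 by omega]
  refine ⟨![a0, a1, a2, a3, a4, a5], b.equivFun, equivFun_mul n _ b fun i j => ?_⟩
  obtain ⟨i, hi⟩ := i
  obtain ⟨j, hj⟩ := j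
  simp only [hb, Abasis]
  have r2 : n - 3 + 1 = n - 2 := by omega
  have r1 : n - 1 + 1 = n := by omega
  have r3 : n - 2 + 1 = n - 1 := by omega
  split_ifs with c c c c c c c c
  · rw [← hbv, chain_mul n hn e h1 h2 (i + 1) (j + 1) (by omega) (by omega) (by omega) (by omega),
      if_pos (by omega)]
    congr 2
    omega
  · obtain ⟨rfl, rfl⟩ := c
    rw [← hbv, r2, r3, zero_add, h3]
  · obtain ⟨rfl, rfl⟩ := c
    rw [r2, zero_add, q0, hv]; rfl
  · obtain ⟨rfl, rfl⟩ := c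
    rw [r2, q1, hv]; rfl
  · obtain ⟨rfl, rfl⟩ := c
    rw [r2, r1, q2, hv]; rfl
  · obtain ⟨rfl, rfl⟩ := c
    rw [r1, zero_add, q3, hv]; rfl
  · obtain ⟨rfl, rfl⟩ := c
    rw [r1, r2, q4, hv]; rfl
  · obtain ⟨rfl, rfl⟩ := c
    rw [r1, q5, hv]; rfl
  · suffices h : e (i + 1) * e (j + 1) = 0 by rw [h, map_zero]
    have hi4 : i + 1 ≤ n - 3 ∨ i = n - 3 ∨ i = n - 2 ∨ i = n - 1 := by omega
    have hj4 : j + 1 ≤ n - 3 ∨ j = n - 3 ∨ j = n - 2 ∨ j = n - 1 := by omega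
    rcases hi4 with hi4 | rfl | rfl | rfl
    · rcases hj4 with hj4 | rfl | rfl | rfl
      · rw [chain_mul n hn e h1 h2 _ _ (by omega) hi4 (by omega) hj4, if_neg (by omega)]
      · rw [r2, iu _ (by omega) hi4]
      · rw [r3, iv _ (by omega) hi4]
      · rw [r1, iw _ (by omega) hi4]
    · rcases hj4 with hj4 | rfl | rfl | rfl
      · rw [r2, ui _ (by omega) hj4]
      · omega
      · rw [r2, r3, uv]
      · omega
    · rcases hj4 with hj4 | rfl | rfl | rfl
      · rw [r3, vi _ (by omega) hj4]
      · rw [r3, r2, vu]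
      · rw [r3, vv]
      · rw [r3, r1, vw]
    · rcases hj4 with hj4 | rfl | rfl | rfl
      · rw [r1, wi _ (by omega) hj4]
      · omega
      · rw [r1, r3, wv]
      · omega
end

section
/- For every integer n ≥ 7 and every choice of parameters (α₁,α₂,α₃,α₄,α₅,α₆) ∈ ℂ⁶, the multiplication table of A(α₁,α₂,α₃,α₄,α₅,α₆) defines an associative multiplication, and the resulting n-dimensional algebra A is nilpotent of nilindex n−3: writing A¹ = A and A^{k+1} = A^k·A, one has A^{n−3} = span{e_{n−3}} ≠ 0 and A^{n−2} = 0. -/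
/-- Powers of the algebra `A(α)`:  `Apow n α k` formalizes `A^{k+1}`, i.e.
`Apow n α 0 = A¹ = A` and `Apow n α (k+1) = span {x·y | x ∈ A^{k+1}, y ∈ A}`. -/
noncomputable def Apow (n : ℕ) (α : Fin 6 → ℂ) : ℕ → Submodule ℂ (Fin n → ℂ)
  | 0 => ⊤
  | k + 1 => Submodule.span ℂ {z : Fin n → ℂ | ∃ x ∈ Apow n α k, ∃ y : Fin n → ℂ, z = Amul n α x y}

theorem bvec_apply (n m : ℕ) (h : m < n) (p : Fin n) :
    bvec n m h p = if p.1 = m then 1 else 0 := by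
  simp [bvec, Pi.single_apply, Fin.ext_iff]

/-! ### Bilinearity -/

/-- The multiplication `Amul` as a bilinear map. -/
noncomputable def Abil (n : ℕ) (α : Fin 6 → ℂ) :
    (Fin n → ℂ) →ₗ[ℂ] (Fin n → ℂ) →ₗ[ℂ] (Fin n → ℂ) :=
  LinearMap.mk₂ ℂ (Amul n α)
    (by intros; simp [Amul, add_mul, add_smul, Finset.sum_add_distrib])
    (by intros; simp [Amul, Finset.smul_sum, smul_smul, mul_assoc])
    (by intros; simp [Amul, mul_add, add_smul, Finset.sum_add_distrib])
    (by intros; simp [Amul, Finset.smul_sum, smul_smul, mul_left_comm])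

theorem Abil_apply (n : ℕ) (α : Fin 6 → ℂ) (x y : Fin n → ℂ) :
    Abil n α x y = Amul n α x y := rfl

theorem Amul_single (n : ℕ) (α : Fin 6 → ℂ) (i j : Fin n) :
    Amul n α (Pi.single i 1) (Pi.single j 1) = Abasis n α i j := by
  simp [Amul, Pi.single_apply]

theorem Amul_bvec (n : ℕ) (α : Fin 6 → ℂ) (i j : ℕ) (hi : i < n) (hj : j < n) :
    Amul n α (bvec n i hi) (bvec n j hj) = Abasis n α ⟨i, hi⟩ ⟨j, hj⟩ :=
  Amul_single n α _ _

/-! ### Products of basis vectors -/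

theorem Abasis_of_le {n : ℕ} (α : Fin 6 → ℂ) {i j : Fin n} (h : i.1 + j.1 + 2 ≤ n - 3) :
    Abasis n α i j = bvec n (i.1 + j.1 + 1) (by omega) := by
  simp [Abasis, h]

theorem Abasis_of_not_le {n : ℕ} (hn : 7 ≤ n) (α : Fin 6 → ℂ) {i j : Fin n}
    (h : ¬ i.1 + j.1 + 2 ≤ n - 3) :
    ∃ c : ℂ, Abasis n α i j = c • bvec n (n - 2) (by omega) := by
  unfold Abasis
  rw [dif_neg h]
  split_ifs
  · exact ⟨1, (one_smul _ _).symm⟩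
  all_goals first | exact ⟨_, rfl⟩ | exact ⟨0, (zero_smul _ _).symm⟩

/-- A left factor outside the exceptional indices `0`, `n - 3`, `n - 1` has no exceptional
product. -/
theorem Abasis_eq_zero_left {n : ℕ} (α : Fin 6 → ℂ) {i j : Fin n}
    (h : ¬ i.1 + j.1 + 2 ≤ n - 3) (h0 : i.1 ≠ 0) (h3 : i.1 ≠ n - 3) (h1 : i.1 ≠ n - 1) :
    Abasis n α i j = 0 := by
  simp [Abasis, h, h0, h3, h1]

/-- A right factor outside the exceptional indices `0`, `n - 3`, `n - 1` has no exceptional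
product. -/
theorem Abasis_eq_zero_right {n : ℕ} (α : Fin 6 → ℂ) {i j : Fin n}
    (h : ¬ i.1 + j.1 + 2 ≤ n - 3) (h0 : j.1 ≠ 0) (h3 : j.1 ≠ n - 3) (h1 : j.1 ≠ n - 1) :
    Abasis n α i j = 0 := by
  simp [Abasis, h, h0, h3, h1]

/-! ### Associativity -/

theorem Amul_Abasis_left {n : ℕ} (hn : 7 ≤ n) (α : Fin 6 → ℂ) (i j k : Fin n) :
    Amul n α (Abasis n α i j) (Pi.single k 1) =
      if h : i.1 + j.1 + k.1 + 3 ≤ n - 3 then bvec n (i.1 + j.1 + k.1 + 2) (by omega) else 0 := by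
  by_cases hij : i.1 + j.1 + 2 ≤ n - 3
  · rw [Abasis_of_le α hij, bvec, Amul_single]
    split_ifs with h
    · rw [Abasis_of_le α (by simp only; omega)]
      congr 1
      simp only; omega
    · apply Abasis_eq_zero_left <;> simp only <;> omega
  · obtain ⟨c, hc⟩ := Abasis_of_not_le hn α hij
    rw [dif_neg (by omega), hc, ← Abil_apply, map_smul, LinearMap.smul_apply, Abil_apply, bvec,
      Amul_single, Abasis_eq_zero_left, smul_zero] <;> simp only <;> omega

theorem Amul_Abasis_right {n : ℕ} (hn : 7 ≤ n) (α : Fin 6 → ℂ) (i j k : Fin n) :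
    Amul n α (Pi.single i 1) (Abasis n α j k) =
      if h : i.1 + j.1 + k.1 + 3 ≤ n - 3 then bvec n (i.1 + j.1 + k.1 + 2) (by omega) else 0 := by
  by_cases hjk : j.1 + k.1 + 2 ≤ n - 3
  · rw [Abasis_of_le α hjk, bvec, Amul_single]
    split_ifs with h
    · rw [Abasis_of_le α (by simp only; omega)]
      congr 1
      simp only; omega
    · apply Abasis_eq_zero_right <;> simp only <;> omega
  · obtain ⟨c, hc⟩ := Abasis_of_not_le hn α hjk
    rw [dif_neg (by omega), hc, ← Abil_apply, map_smul, Abil_apply, bvec,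
      Amul_single, Abasis_eq_zero_right, smul_zero] <;> simp only <;> omega

theorem Amul_assoc {n : ℕ} (hn : 7 ≤ n) (α : Fin 6 → ℂ) (x y z : Fin n → ℂ) :
    Amul n α (Amul n α x y) z = Amul n α x (Amul n α y z) := by
  -- `(x, y, z) ↦ (xy)z` and `(x, y, z) ↦ x(yz)` as trilinear maps
  have key : (Abil n α).compr₂ (Abil n α) =
      ((LinearMap.llcomp ℂ (Fin n → ℂ) (Fin n → ℂ) (Fin n → ℂ)).comp (Abil n α)).compl₂
        (Abil n α) := by
    refine (Pi.basisFun ℂ (Fin n)).ext fun i => (Pi.basisFun ℂ (Fin n)).ext fun j =>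
      (Pi.basisFun ℂ (Fin n)).ext fun k => ?_
    simp only [Pi.basisFun_apply, LinearMap.compr₂_apply, LinearMap.compl₂_apply,
      LinearMap.comp_apply, LinearMap.llcomp_apply, Abil_apply, Amul_single,
      Amul_Abasis_left hn, Amul_Abasis_right hn]
  exact LinearMap.congr_fun (LinearMap.congr_fun (LinearMap.congr_fun key x) y) z

/-! ### Powers of the algebra -/

/-- The span of `e_k, …, e_{n-4}` (0-based), described by the vanishing of all other
coordinates. -/
def window (n k : ℕ) : Submodule ℂ (Fin n → ℂ) where
  carrier := {x | ∀ m : Fin n, ¬ (k ≤ m.1 ∧ m.1 ≤ n - 4) → x m = 0}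
  add_mem' hx hy m hm := by simp [hx m hm, hy m hm]
  zero_mem' _ _ := rfl
  smul_mem' c x hx m hm := by simp [hx m hm]

theorem Amul_mem_window {n : ℕ} (hn : 7 ≤ n) (α : Fin 6 → ℂ) {k : ℕ} (hk : 1 ≤ k)
    {x : Fin n → ℂ} (hx : ∀ i : Fin n, i.1 < k ∨ i.1 = n - 3 ∨ i.1 = n - 1 → x i = 0)
    (y : Fin n → ℂ) : Amul n α x y ∈ window n (k + 1) := by
  refine Submodule.sum_mem _ fun i _ => Submodule.sum_mem _ fun j _ => ?_
  by_cases hi : i.1 < k ∨ i.1 = n - 3 ∨ i.1 = n - 1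
  · simp [hx i hi]
  refine Submodule.smul_mem _ _ ?_
  by_cases h : i.1 + j.1 + 2 ≤ n - 3
  · rw [Abasis_of_le α h]
    intro m hm
    rw [bvec_apply, if_neg (by omega)]
  · rw [Abasis_eq_zero_left α h (by omega) (by omega) (by omega)]
    exact Submodule.zero_mem _

theorem apply_eq_zero_of_mem_Apow_one {n : ℕ} (hn : 7 ≤ n) (α : Fin 6 → ℂ) {x : Fin n → ℂ}
    (hx : x ∈ Apow n α 1) (m : Fin n) (hm : m.1 < 1 ∨ m.1 = n - 3 ∨ m.1 = n - 1) : x m = 0 := by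
  have hle : Apow n α 1 ≤ LinearMap.ker (LinearMap.proj m : (Fin n → ℂ) →ₗ[ℂ] ℂ) := by
    refine Submodule.span_le.2 ?_
    rintro _ ⟨a, -, b, rfl⟩
    refine Submodule.sum_mem _ fun i _ => Submodule.sum_mem _ fun j _ =>
      Submodule.smul_mem _ _ ?_
    rw [LinearMap.mem_ker, LinearMap.proj_apply]
    by_cases h : i.1 + j.1 + 2 ≤ n - 3
    · rw [Abasis_of_le α h, bvec_apply, if_neg (by omega)]
    · obtain ⟨c, hc⟩ := Abasis_of_not_le hn α h
      rw [hc, Pi.smul_apply, bvec_apply, if_neg (by omega), smul_zero]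
  exact hle hx

theorem Apow_le_window {n : ℕ} (hn : 7 ≤ n) (α : Fin 6 → ℂ) {k : ℕ} (hk : 2 ≤ k) :
    Apow n α k ≤ window n k := by
  induction k, hk using Nat.le_induction with
  | base =>
    refine Submodule.span_le.2 ?_
    rintro _ ⟨x, hx, y, rfl⟩
    exact Amul_mem_window hn α le_rfl (apply_eq_zero_of_mem_Apow_one hn α hx) y
  | succ k hk ih =>
    refine Submodule.span_le.2 ?_
    rintro _ ⟨x, hx, y, rfl⟩
    exact Amul_mem_window hn α (by omega) (fun i hi => ih hx i (by omega)) y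

theorem bvec_mem_Apow {n : ℕ} (hn : 7 ≤ n) (α : Fin 6 → ℂ) (k : ℕ) (hk : k ≤ n - 4) :
    bvec n k (by omega) ∈ Apow n α k := by
  induction k with
  | zero => exact Submodule.mem_top
  | succ k ih =>
    refine Submodule.subset_span ⟨_, ih (by omega), bvec n 0 (by omega), ?_⟩
    rw [Amul_bvec, Abasis_of_le α (by simp only; omega)]
    simp

/-- For every `n ≥ 7` and `α ∈ ℂ⁶` the multiplication of `A(α₁,…,α₆)` is
associative, and the resulting algebra is nilpotent of nilindex `n-3`:
`A^{n-3} = span{e_{n-3}} ≠ 0` and `A^{n-2} = 0`. -/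
theorem Amul_associative_and_nilindex (n : ℕ) (hn : 7 ≤ n) (α : Fin 6 → ℂ) :
    (∀ x y z : Fin n → ℂ, Amul n α (Amul n α x y) z = Amul n α x (Amul n α y z)) ∧
    Apow n α (n - 4) = Submodule.span ℂ {bvec n (n - 4) (by omega)} ∧
    Apow n α (n - 4) ≠ ⊥ ∧
    Apow n α (n - 3) = ⊥ := by
  have hmem := bvec_mem_Apow hn α (n - 4) le_rfl
  refine ⟨Amul_assoc hn α, le_antisymm ?_ ?_, ?_, ?_⟩
  · intro x hx
    have hw := Apow_le_window hn α (by omega) hx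
    refine Submodule.mem_span_singleton.2 ⟨x ⟨n - 4, by omega⟩, ?_⟩
    ext m
    rw [Pi.smul_apply, bvec_apply, smul_eq_mul]
    split_ifs with h
    · rw [mul_one]
      congr 1
      exact Fin.ext h.symm
    · rw [hw m (by omega), mul_zero]
  · exact (Submodule.span_singleton_le_iff_mem _ _).2 hmem
  · intro hbot
    rw [hbot, Submodule.mem_bot] at hmem
    have := congrFun hmem ⟨n - 4, by omega⟩
    simp [bvec_apply] at this
  · refine (Submodule.eq_bot_iff _).2 fun x hx => ?_
    ext m
    exact Apow_le_window hn α (by omega) hx m (by omega)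
end

section
/- Let n ≥ 7 and let α₁, α₄ ∈ ℂ with α₄ ≠ 0. Then the algebra A(α₁,0,0,α₄,0,0) is isomorphic as a non-unital ℂ-algebra to A(0,0,0,1,0,0). -/
/-- The truncated polynomial part of the multiplication, `eᵢ · eⱼ = e_{i+j}` for `i + j ≤ n - 3`
(written with 0-based indices). -/
noncomputable def chainMul (n : ℕ) (x y : Fin n → ℂ) : Fin n → ℂ :=
  ∑ i : Fin n, ∑ j : Fin n, (x i * y j) •
    (if h : i.1 + j.1 + 2 ≤ n - 3 then bvec n (i.1 + j.1 + 1) (by omega) else 0)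

/-- With `α₂ = α₃ = α₅ = α₆ = 0`, the multiplication is `chainMul` plus a multiple
of `e_{n-1}`. -/
theorem Amul_eq (n : ℕ) (hn : 7 ≤ n) (a b : ℂ) (x y : Fin n → ℂ) :
    Amul n ![a, 0, 0, b, 0, 0] x y = chainMul n x y +
      (x ⟨0, by omega⟩ * y ⟨n - 3, by omega⟩ + a * (x ⟨n - 3, by omega⟩ * y ⟨0, by omega⟩)
        + b * (x ⟨n - 1, by omega⟩ * y ⟨0, by omega⟩)) • bvec n (n - 2) (by omega) := by
  -- The index pairs in the definition of `Abasis` are disjoint, so its cases add up.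
  have key : ∀ i j : Fin n, Abasis n ![a, 0, 0, b, 0, 0] i j =
      (if h : i.1 + j.1 + 2 ≤ n - 3 then bvec n (i.1 + j.1 + 1) (by omega) else 0)
      + ((if i = ⟨0, by omega⟩ then if j = ⟨n - 3, by omega⟩ then (1 : ℂ) else 0 else 0)
        + (if i = ⟨n - 3, by omega⟩ then if j = ⟨0, by omega⟩ then a else 0 else 0)
        + (if i = ⟨n - 1, by omega⟩ then if j = ⟨0, by omega⟩ then b else 0 else 0))
          • bvec n (n - 2) (by omega) := by
    intro i j
    have e1 : n - 3 ≠ 0 := by omega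
    have e2 : n - 1 ≠ 0 := by omega
    have e3 : n - 1 ≠ n - 3 := by omega
    simp only [Abasis, Fin.ext_iff]
    split_ifs <;> first | omega | simp
  simp only [Amul, chainMul, key, smul_add, Finset.sum_add_distrib, smul_smul, ← Finset.sum_smul,
    mul_add, mul_ite, mul_one, mul_zero]
  congr 2
  simp [Finset.sum_ite_irrel, mul_comm]

/-- The linear automorphism `e_{n-2} ↦ e_{n-2} + a e_n`, `e_n ↦ b e_n`, in coordinates. -/
noncomputable def shear (n : ℕ) (hn : 7 ≤ n) (a b : ℂ) (hb : b ≠ 0) :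
    (Fin n → ℂ) ≃ₗ[ℂ] (Fin n → ℂ) where
  toFun x k := if k.1 = n - 1 then b * x k + a * x ⟨n - 3, by omega⟩ else x k
  invFun x k := if k.1 = n - 1 then b⁻¹ * (x k - a * x ⟨n - 3, by omega⟩) else x k
  map_add' x y := by
    ext k
    simp only [Pi.add_apply]
    split_ifs <;> ring
  map_smul' c x := by
    ext k
    simp only [Pi.smul_apply, smul_eq_mul, RingHom.id_apply]
    split_ifs <;> ring
  left_inv x := by
    have e : n - 3 ≠ n - 1 := by omega
    ext k
    simp only [if_neg e]
    split_ifs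
    · field_simp
      ring
    · rfl
  right_inv x := by
    have e : n - 3 ≠ n - 1 := by omega
    ext k
    simp only [if_neg e]
    split_ifs
    · field_simp
      ring
    · rfl

theorem shear_apply (n : ℕ) (hn : 7 ≤ n) (a b : ℂ) (hb : b ≠ 0) (x : Fin n → ℂ) (k : Fin n) :
    shear n hn a b hb x k =
      if k.1 = n - 1 then b * x k + a * x ⟨n - 3, by omega⟩ else x k := rfl

theorem shear_bvec (n : ℕ) (hn : 7 ≤ n) (a b : ℂ) (hb : b ≠ 0) (m : ℕ) (hm : m < n)
    (h1 : m ≠ n - 1) (h3 : m ≠ n - 3) :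
    shear n hn a b hb (bvec n m hm) = bvec n m hm := by
  ext k
  rw [shear_apply]
  split_ifs with hk
  · have hkm : k ≠ ⟨m, hm⟩ := by
      rintro rfl
      exact h1 hk
    have h3m : (⟨n - 3, by omega⟩ : Fin n) ≠ ⟨m, hm⟩ := by
      simpa [Fin.ext_iff] using h3.symm
    simp [bvec, Pi.single_eq_of_ne hkm, Pi.single_eq_of_ne h3m]
  · rfl

theorem shear_chainMul (n : ℕ) (hn : 7 ≤ n) (a b : ℂ) (hb : b ≠ 0) (x y : Fin n → ℂ) :
    shear n hn a b hb (chainMul n x y) =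
      chainMul n (shear n hn a b hb x) (shear n hn a b hb y) := by
  simp only [chainMul, map_sum, map_smul]
  refine Finset.sum_congr rfl fun i _ => Finset.sum_congr rfl fun j _ => ?_
  split_ifs with h
  · rw [shear_bvec n hn a b hb _ _ (by omega) (by omega), shear_apply, shear_apply,
      if_neg (by omega), if_neg (by omega)]
  · simp

/-- **Case a.1.1.1.2.** For `α₄ ≠ 0`, the algebra `A(α₁,0,0,α₄,0,0)` is
isomorphic to `A(0,0,0,1,0,0)`. -/
theorem case_a1112 (n : ℕ) (hn : 7 ≤ n) (a1 a4 : ℂ) (ha4 : a4 ≠ 0) :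
    AIso n ![a1, 0, 0, a4, 0, 0] ![0, 0, 0, 1, 0, 0] := by
  refine ⟨shear n hn a1 a4 ha4, fun x y => ?_⟩
  rw [Amul_eq n hn, Amul_eq n hn, map_add, map_smul, shear_chainMul,
    shear_bvec n hn a1 a4 ha4 (n - 2) _ (by omega) (by omega)]
  have e0 : (0 : ℕ) ≠ n - 1 := by omega
  have e3 : n - 3 ≠ n - 1 := by omega
  simp only [shear_apply, if_neg e0, if_neg e3, if_true]
  congr 2
  ring
end

section
/- Let n ≥ 7 and let α₁, α₂ ∈ ℂ with α₂ ≠ 0. Then the algebra A(α₁,α₂,0,0,0,0) is isomorphic as a non-unital ℂ-algebra to A(1,1,0,0,0,0) if α₁ = 1, and to A(0,1,0,0,0,0) if α₁ ≠ 1. -/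
lemma Amul_apply (n : ℕ) (α : Fin 6 → ℂ) (x y : Fin n → ℂ) (k : Fin n) :
    Amul n α x y k = ∑ i : Fin n, ∑ j : Fin n, x i * y j * Abasis n α i j k := by
  simp [Amul, Finset.sum_apply]

/-- On the coordinates of `e₁, …, e_{n-3}` the product is convolution. -/
lemma Amul_low (n : ℕ) (hn : 7 ≤ n) (p q : ℂ) (x y : Fin n → ℂ) (k : Fin n) (hk : k.1 < n - 3) :
    Amul n ![p, q, 0, 0, 0, 0] x y k =
      ∑ i : Fin n, ∑ j : Fin n, if i.1 + j.1 + 1 = k.1 then x i * y j else 0 := by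
  rw [Amul_apply]
  refine Finset.sum_congr rfl fun i _ => Finset.sum_congr rfl fun j _ => ?_
  have hi := i.2
  have hj := j.2
  unfold Abasis bvec
  split_ifs <;> simp [Pi.single_apply, Fin.ext_iff] <;> omega

/-- The `e_{n-1}`-coordinate of the product is the bilinear form with entries `p`, `q`. -/
lemma Amul_top (n : ℕ) (hn : 7 ≤ n) (p q : ℂ) (x y : Fin n → ℂ) :
    Amul n ![p, q, 0, 0, 0, 0] x y ⟨n - 2, by omega⟩ =
      x ⟨0, by omega⟩ * y ⟨n - 3, by omega⟩ + p * (x ⟨n - 3, by omega⟩ * y ⟨0, by omega⟩)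
        + q * (x ⟨n - 3, by omega⟩ * y ⟨n - 3, by omega⟩) := by
  rw [Amul_apply]
  have key : ∀ i j : Fin n, x i * y j * Abasis n ![p, q, 0, 0, 0, 0] i j ⟨n - 2, by omega⟩ =
      (if i = ⟨0, by omega⟩ then if j = ⟨n - 3, by omega⟩ then x i * y j else 0 else 0)
      + (if i = ⟨n - 3, by omega⟩ then if j = ⟨0, by omega⟩ then p * (x i * y j) else 0 else 0)
      + (if i = ⟨n - 3, by omega⟩ then
          if j = ⟨n - 3, by omega⟩ then q * (x i * y j) else 0 else 0) := by
    intro i j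
    have hi := i.2
    have hj := j.2
    simp only [Fin.ext_iff]
    unfold Abasis bvec
    split_ifs <;> first
      | omega
      | (simp [Pi.single_apply, Fin.ext_iff]; done)
      | (simp [Pi.single_apply, Fin.ext_iff]; omega)
      | (simp [Pi.single_apply, Fin.ext_iff]; ring1)
  simp only [key, Finset.sum_add_distrib]
  simp

lemma Amul_u (n : ℕ) (hn : 7 ≤ n) (p q : ℂ) (x y : Fin n → ℂ) (k : Fin n) (hk : k.1 = n - 3) :
    Amul n ![p, q, 0, 0, 0, 0] x y k = 0 := by
  rw [Amul_apply]
  refine Finset.sum_eq_zero fun i _ => Finset.sum_eq_zero fun j _ => ?_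
  unfold Abasis bvec
  split_ifs <;> simp [Pi.single_apply, Fin.ext_iff] <;> omega

lemma Amul_w (n : ℕ) (hn : 7 ≤ n) (p q : ℂ) (x y : Fin n → ℂ) (k : Fin n) (hk : k.1 = n - 1) :
    Amul n ![p, q, 0, 0, 0, 0] x y k = 0 := by
  rw [Amul_apply]
  refine Finset.sum_eq_zero fun i _ => Finset.sum_eq_zero fun j _ => ?_
  unfold Abasis bvec
  split_ifs <;> simp [Pi.single_apply, Fin.ext_iff] <;> omega

/-- The `e₂`-coordinate of a product only involves the `e₁`-coordinates of the factors. -/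
lemma Amul_one (n : ℕ) (hn : 7 ≤ n) (p q : ℂ) (x y : Fin n → ℂ) :
    Amul n ![p, q, 0, 0, 0, 0] x y ⟨1, by omega⟩ = x ⟨0, by omega⟩ * y ⟨0, by omega⟩ := by
  rw [Amul_low n hn p q x y _ (by simp; omega)]
  have key : ∀ i j : Fin n, (if i.1 + j.1 + 1 = 1 then x i * y j else 0) =
      if i = ⟨0, by omega⟩ then if j = ⟨0, by omega⟩ then x i * y j else 0 else 0 := by
    intro i j
    simp only [Fin.ext_iff]
    split_ifs <;> first | rfl | omega
  simp only [key]
  simp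

/-- The linear map `e₁ ↦ c e₁ + b e_{n-2}`, `e₂ ↦ c² e₂ + d e_{n-1}`, `eᵢ ↦ cⁱ eᵢ` for
`3 ≤ i ≤ n - 3`, `e_{n-2} ↦ s e_{n-2}`, `e_{n-1} ↦ t e_{n-1}`, `eₙ ↦ eₙ`, written in coordinates. -/
noncomputable def phiMap (n : ℕ) (hn : 7 ≤ n) (c b d s t : ℂ) :
    (Fin n → ℂ) →ₗ[ℂ] (Fin n → ℂ) where
  toFun x k :=
    if k.1 < n - 3 then c ^ (k.1 + 1) * x k
    else if k.1 = n - 3 then s * x k + b * x ⟨0, by omega⟩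
    else if k.1 = n - 2 then t * x k + d * x ⟨1, by omega⟩
    else x k
  map_add' x y := by
    ext k
    simp only [Pi.add_apply]
    split_ifs <;> ring
  map_smul' r x := by
    ext k
    simp only [Pi.smul_apply, smul_eq_mul, RingHom.id_apply]
    split_ifs <;> ring

lemma phiMap_apply (n : ℕ) (hn : 7 ≤ n) (c b d s t : ℂ) (x : Fin n → ℂ) (k : Fin n) :
    phiMap n hn c b d s t x k =
    if k.1 < n - 3 then c ^ (k.1 + 1) * x k
    else if k.1 = n - 3 then s * x k + b * x ⟨0, by omega⟩
    else if k.1 = n - 2 then t * x k + d * x ⟨1, by omega⟩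
    else x k := rfl

lemma phiMap_injective (n : ℕ) (hn : 7 ≤ n) (c b d s t : ℂ) (hc : c ≠ 0) (hs : s ≠ 0)
    (ht : t ≠ 0) : Function.Injective (phiMap n hn c b d s t) := by
  rw [injective_iff_map_eq_zero]
  intro x hx
  have h : ∀ k, phiMap n hn c b d s t x k = 0 := fun k => by rw [hx]; rfl
  have hlow : ∀ k : Fin n, k.1 < n - 3 → x k = 0 := by
    intro k hk
    have := h k
    rw [phiMap_apply, if_pos hk] at this
    exact (mul_eq_zero.1 this).resolve_left (pow_ne_zero _ hc)
  have h0 := hlow ⟨0, by omega⟩ (by simp; omega)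
  have h1 := hlow ⟨1, by omega⟩ (by simp; omega)
  ext k
  have hk := h k
  rw [phiMap_apply, h0, h1] at hk
  split_ifs at hk with h2 h3 h4
  · exact hlow k h2
  · simpa [hs] using hk
  · simpa [ht] using hk
  · exact hk

/-- The four equations say that the form with entries `p', q'`, pulled back along
`e₁ ↦ c e₁ + b e_{n-2}`, `e_{n-2} ↦ s e_{n-2}`, is `t` times the form with entries `p, q`, up to
its value `d` at `(e₁, e₁)`. -/
lemma AIso_of_params (n : ℕ) (hn : 7 ≤ n) (p q p' q' c b d s t : ℂ) (hc : c ≠ 0) (hs : s ≠ 0)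
    (ht : t ≠ 0) (h11 : c * b + p' * (b * c) + q' * (b * b) = d)
    (h1u : c * s + q' * (b * s) = t) (hu1 : p' * (s * c) + q' * (s * b) = t * p)
    (huu : q' * (s * s) = t * q) :
    AIso n ![p, q, 0, 0, 0, 0] ![p', q', 0, 0, 0, 0] := by
  refine ⟨LinearEquiv.ofInjectiveEndo _ (phiMap_injective n hn c b d s t hc hs ht), ?_⟩
  intro x y
  simp only [LinearEquiv.coe_ofInjectiveEndo]
  ext k
  have hk := k.2
  by_cases h1 : k.1 < n - 3
  · rw [phiMap_apply, if_pos h1, Amul_low n hn _ _ _ _ k h1, Amul_low n hn _ _ _ _ k h1,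
      Finset.mul_sum]
    refine Finset.sum_congr rfl fun i _ => ?_
    rw [Finset.mul_sum]
    refine Finset.sum_congr rfl fun j _ => ?_
    split_ifs with hij
    · rw [phiMap_apply, phiMap_apply, if_pos (by omega), if_pos (by omega), ← hij]
      ring
    · simp
  by_cases h2 : k.1 = n - 3
  · rw [Amul_u n hn _ _ _ _ k h2, phiMap_apply, if_neg h1, if_pos h2, Amul_u n hn _ _ _ _ k h2,
      Amul_low n hn _ _ _ _ _ (by simp; omega)]
    simp
  by_cases h3 : k.1 = n - 2
  · have hlt : n - 2 < n := by omega
    obtain rfl : k = ⟨n - 2, hlt⟩ := Fin.ext h3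
    rw [phiMap_apply, if_neg h1, if_neg h2, if_pos h3, Amul_one n hn, Amul_top n hn,
      Amul_top n hn]
    have e0 : ∀ z, phiMap n hn c b d s t z ⟨0, by omega⟩ = c * z ⟨0, by omega⟩ := by
      intro z
      rw [phiMap_apply, if_pos (by simp; omega)]
      simp
    have eu : ∀ z, phiMap n hn c b d s t z ⟨n - 3, by omega⟩ =
        s * z ⟨n - 3, by omega⟩ + b * z ⟨0, by omega⟩ := by
      intro z
      rw [phiMap_apply, if_neg (by simp), if_pos rfl]
    rw [e0, e0, eu, eu]
    generalize x ⟨0, _⟩ = x0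
    generalize y ⟨0, _⟩ = y0
    generalize x ⟨n - 3, _⟩ = xu
    generalize y ⟨n - 3, _⟩ = yu
    linear_combination (-x0 * y0) * h11 - x0 * yu * h1u - xu * y0 * hu1 - xu * yu * huu
  · rw [Amul_w n hn _ _ _ _ k (by omega), phiMap_apply, if_neg h1, if_neg h2, if_neg h3,
      Amul_w n hn _ _ _ _ k (by omega)]

/-- **Case a.1.1.2.1.** For `α₂ ≠ 0`, the algebra `A(α₁,α₂,0,0,0,0)` is
isomorphic to `A(1,1,0,0,0,0)` when `α₁ = 1`, and to `A(0,1,0,0,0,0)` when `α₁ ≠ 1`. -/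
theorem case_a1121 (n : ℕ) (hn : 7 ≤ n) (a1 a2 : ℂ) (ha2 : a2 ≠ 0) :
    (a1 = 1 → AIso n ![a1, a2, 0, 0, 0, 0] ![1, 1, 0, 0, 0, 0]) ∧
    (a1 ≠ 1 → AIso n ![a1, a2, 0, 0, 0, 0] ![0, 1, 0, 0, 0, 0]) := by
  constructor
  · rintro rfl
    exact AIso_of_params n hn 1 a2 1 1 1 0 0 a2 a2 one_ne_zero ha2 ha2
      (by ring) (by ring) (by ring) (by ring)
  · intro h
    -- With `c + b = 1` the equations reduce to `s = t = α₂` and `b = d = α₁`.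
    exact AIso_of_params n hn a1 a2 0 1 (1 - a1) a1 a1 a2 a2 (sub_ne_zero.2 (Ne.symm h)) ha2 ha2
      (by ring) (by ring) (by ring) (by ring)
end

section
/- Let n > 6 and let A be a non-unital associative ℂ-algebra with basis e₁, …, eₙ such that: e₁·eᵢ = e_{i+1} for 1 ≤ i ≤ n−4, e₁·e_{n−3} = 0, e₁·e_{n−2} = e_{n−1}, e₁·e_{n−1} = 0, e₁·eₙ = 0; e_{n−2}·e₁ and e_{n−2}·e_{n−2} lie in span{e₂, e_{n−1}, eₙ}; and each of the products e_{n−2}·e_{n−1}, e_{n−2}·eₙ, e_{n−1}·e₁, e_{n−1}·e_{n−2}, eₙ·e₁, eₙ·e_{n−2}, eₙ·e_{n−1}, eₙ·eₙ lies in span{e₃}. Then all the products listed as lying in span{e₃} are in fact zero; e_{n−2}·e₁ and e_{n−2}·e_{n−2} lie in span{e_{n−1}, eₙ}; e_{n−1}·e_{n−1} = e_{n−1}·eₙ = 0; and e_{n−1}·eᵢ = eₙ·eᵢ = 0 for 1 ≤ i ≤ n−3 while e_{n−2}·eⱼ = 0 for 2 ≤ j ≤ n−3. Consequently A is isomorphic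 to B(β₁,β₂,β₃,β₄) for suitable β₁,β₂,β₃,β₄ ∈ ℂ. -/
/-- Structure constants of the algebra `B(β₁,…,β₄)` on basis vectors.
Index `i : Fin n` represents the basis vector `e_{i+1}` of the paper. -/
noncomputable def Bbasis (n : ℕ) (β : Fin 4 → ℂ) (i j : Fin n) : Fin n → ℂ :=
  if h : i.1 + j.1 + 2 ≤ n - 3 then
    bvec n (i.1 + j.1 + 1) (by omega)
  else if i.1 = 0 ∧ j.1 = n - 3 then
    bvec n (n - 2) (by have := i.2; omega)
  else if i.1 = n - 3 ∧ j.1 = 0 then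
    β 0 • bvec n (n - 2) (by have := i.2; omega) + β 1 • bvec n (n - 1) (by have := i.2; omega)
  else if i.1 = n - 3 ∧ j.1 = n - 3 then
    β 2 • bvec n (n - 2) (by have := i.2; omega) + β 3 • bvec n (n - 1) (by have := i.2; omega)
  else 0

/-- The bilinear multiplication of the algebra `B(β₁,…,β₄)` on `Fin n → ℂ`. -/
noncomputable def Bmul (n : ℕ) (β : Fin 4 → ℂ) (x y : Fin n → ℂ) : Fin n → ℂ :=
  ∑ i : Fin n, ∑ j : Fin n, (x i * y j) • Bbasis n β i j

/-- `B(β) ≅ B(β')` as non-unital `ℂ`-algebras. -/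
def BIso (n : ℕ) (β β' : Fin 4 → ℂ) : Prop :=
  ∃ φ : (Fin n → ℂ) ≃ₗ[ℂ] (Fin n → ℂ),
    ∀ x y : Fin n → ℂ, φ (Bmul n β x y) = Bmul n β' (φ x) (φ y)

section Products

variable {A : Type*} [NonUnitalRing A]

/-- An element of a line `span {u}` killed by a left multiplication that does not kill `u` is
zero. -/
lemma eq_zero_of_mul_left [Module ℂ A] [SMulCommClass ℂ A A] {a u w : A}
    (hw : w ∈ Submodule.span ℂ ({u} : Set A))
    (hu : a * u ≠ 0) (h : a * w = 0) : w = 0 := by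
  obtain ⟨c, rfl⟩ := Submodule.mem_span_singleton.1 hw
  rw [mul_smul_comm, smul_eq_zero] at h
  rcases h with h | h
  · rw [h, zero_smul]
  · exact absurd h hu

/-- The analogue of `eq_zero_of_mul_left` for right multiplication. -/
lemma eq_zero_of_mul_right [Module ℂ A] [IsScalarTower ℂ A A] {a u w : A}
    (hw : w ∈ Submodule.span ℂ ({u} : Set A))
    (hu : u * a ≠ 0) (h : w * a = 0) : w = 0 := by
  obtain ⟨c, rfl⟩ := Submodule.mem_span_singleton.1 hw
  rw [smul_mul_assoc, smul_eq_zero] at h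
  rcases h with h | h
  · rw [h, zero_smul]
  · exact absurd h hu

/-- If left multiplication by `a` kills `y` and `z` but not `u`, then an element of
`span {u, y, z}` killed by it has no `u`-component. -/
lemma exists_smul_add_smul [Module ℂ A] [SMulCommClass ℂ A A] {a u y z w : A}
    (hw : w ∈ Submodule.span ℂ {u, y, z})
    (hu : a * u ≠ 0) (hy : a * y = 0) (hz : a * z = 0) (h : a * w = 0) :
    ∃ r s : ℂ, w = r • y + s • z := by
  obtain ⟨c, r, s, rfl⟩ := Submodule.mem_span_triple.1 hw
  simp only [mul_add, mul_smul_comm, hy, hz, smul_zero, add_zero, smul_eq_zero] at h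
  rcases h with h | h
  · exact ⟨r, s, by simp [h]⟩
  · exact absurd h hu

lemma chain_mul_s11 {e : ℕ → A} {N : ℕ} (h1 : ∀ i : ℕ, 1 ≤ i → i + 1 ≤ N → e 1 * e i = e (i + 1))
    (i j : ℕ) (hi : 1 ≤ i) (hj : 1 ≤ j) (hij : i + j ≤ N) : e i * e j = e (i + j) := by
  induction i, hi using Nat.le_induction with
  | base => rw [h1 j hj (by omega), add_comm]
  | succ i hi ih =>
    rw [← h1 i hi (by omega), mul_assoc, ih (by omega), h1 _ (by omega) (by omega)]
    congr 1; omega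

/-- The chain `e₁, …, e_N` of powers of `e₁` is truncated above degree `N`. -/
lemma chain_mul_eq_zero_s11 {e : ℕ → A} {N : ℕ}
    (h1 : ∀ i : ℕ, 1 ≤ i → i + 1 ≤ N → e 1 * e i = e (i + 1)) (h2 : e 1 * e N = 0)
    (i j : ℕ) (hi : 1 ≤ i) (hiN : i ≤ N) (hjN : j ≤ N) (hij : N < i + j) :
    e i * e j = 0 := by
  induction i, hi using Nat.le_induction with
  | base =>
    obtain rfl : j = N := by omega
    exact h2
  | succ i hi ih =>
    rw [← h1 i hi (by omega), mul_assoc]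
    rcases Nat.lt_or_ge N (i + j) with h | h
    · rw [ih (by omega) h, mul_zero]
    · -- here `i + j = N`, so the inner product is the top power `e_N`
      rw [chain_mul_s11 h1 i j hi (by omega) h, show i + j = N by omega, h2]

/-- A left multiplication which kills `e₁` kills the whole chain `e₁, …, e_N` of its powers. -/
lemma mul_chain_eq_zero {e : ℕ → A} {N : ℕ}
    (h1 : ∀ i : ℕ, 1 ≤ i → i + 1 ≤ N → e 1 * e i = e (i + 1)) {w : A} (hw : w * e 1 = 0)
    (i : ℕ) (hi : 1 ≤ i) (hiN : i ≤ N) : w * e i = 0 := by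
  rcases hi.eq_or_lt with rfl | hi
  · exact hw
  · obtain ⟨k, rfl⟩ : ∃ k, i = k + 1 := ⟨i - 1, by omega⟩
    rw [← h1 k (by omega) (by omega), ← mul_assoc, hw, zero_mul]

/-- If left multiplication by `e₁` kills `e₁ w`, then left multiplication by `eᵢ` kills `w` for
`2 ≤ i ≤ N`. -/
lemma chain_mul_of_sq {e : ℕ → A} {N : ℕ}
    (h1 : ∀ i : ℕ, 1 ≤ i → i + 1 ≤ N → e 1 * e i = e (i + 1)) {w : A}
    (hw : e 1 * (e 1 * w) = 0) (i : ℕ) (hi : 2 ≤ i) (hiN : i ≤ N) : e i * w = 0 := by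
  induction i, hi using Nat.le_induction with
  | base => rw [← h1 1 le_rfl (by omega), mul_assoc, hw]
  | succ i hi ih => rw [← h1 i (by omega) (by omega), mul_assoc, ih (by omega), mul_zero]

/-- The coordinate map of a basis satisfying the multiplication table of `B(β)` is multiplicative. -/
lemma map_mul_of_table [Module ℂ A] [SMulCommClass ℂ A A] [IsScalarTower ℂ A A] {n : ℕ}
    {β : Fin 4 → ℂ} (b : Module.Basis (Fin n) ℂ A)
    (h : ∀ i j, b.equivFun (b i * b j) = Bbasis n β i j) (x y : A) :
    b.equivFun (x * y) = Bmul n β (b.equivFun x) (b.equivFun y) := by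
  conv_lhs => rw [← b.sum_equivFun x, ← b.sum_equivFun y]
  simp only [Finset.sum_mul_sum, map_sum, smul_mul_smul_comm, map_smul, h, Bmul]

end Products

/-- Let `n > 6` and let `A` be a non-unital associative `ℂ`-algebra with
basis `e₁, …, eₙ` adapted to `L_{e₁}` (Jordan blocks of sizes `n-3, 2, 1`), such that
`e_{n-2}e₁` and `e_{n-2}e_{n-2}` lie in `span{e₂, e_{n-1}, eₙ}` and each of
`e_{n-2}e_{n-1}, e_{n-2}eₙ, e_{n-1}e₁, e_{n-1}e_{n-2}, eₙe₁, eₙe_{n-2}, eₙe_{n-1}, eₙeₙ`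
lies in `span{e₃}`.  Then all products listed as lying in `span{e₃}` vanish,
`e_{n-2}e₁, e_{n-2}e_{n-2} ∈ span{e_{n-1}, eₙ}`, `e_{n-1}e_{n-1} = e_{n-1}eₙ = 0`,
`e_{n-1}eᵢ = eₙeᵢ = 0` for `1 ≤ i ≤ n-3`, `e_{n-2}eⱼ = 0` for `2 ≤ j ≤ n-3`, and `A` is
isomorphic to `B(β₁,β₂,β₃,β₄)` for suitable `βᵢ ∈ ℂ`. -/
theorem case_r1_one_r2_two (n : ℕ) (hn : 6 < n) {A : Type*} [NonUnitalRing A] [Module ℂ A]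
    [SMulCommClass ℂ A A] [IsScalarTower ℂ A A] (e : ℕ → A)
    (hli : LinearIndependent ℂ (fun i : Fin n => e (i.1 + 1)))
    (hsp : Submodule.span ℂ (Set.range fun i : Fin n => e (i.1 + 1)) = ⊤)
    (h1 : ∀ i : ℕ, 1 ≤ i → i ≤ n - 4 → e 1 * e i = e (i + 1))
    (h2 : e 1 * e (n - 3) = 0)
    (h3 : e 1 * e (n - 2) = e (n - 1))
    (h4 : e 1 * e (n - 1) = 0)
    (h5 : e 1 * e n = 0)
    (g1 : e (n - 2) * e 1 ∈ Submodule.span ℂ {e 2, e (n - 1), e n})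
    (g2 : e (n - 2) * e (n - 2) ∈ Submodule.span ℂ {e 2, e (n - 1), e n})
    (g3 : e (n - 2) * e (n - 1) ∈ Submodule.span ℂ ({e 3} : Set A))
    (g4 : e (n - 2) * e n ∈ Submodule.span ℂ ({e 3} : Set A))
    (g5 : e (n - 1) * e 1 ∈ Submodule.span ℂ ({e 3} : Set A))
    (g6 : e (n - 1) * e (n - 2) ∈ Submodule.span ℂ ({e 3} : Set A))
    (g7 : e n * e 1 ∈ Submodule.span ℂ ({e 3} : Set A))
    (g8 : e n * e (n - 2) ∈ Submodule.span ℂ ({e 3} : Set A))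
    (g9 : e n * e (n - 1) ∈ Submodule.span ℂ ({e 3} : Set A))
    (g10 : e n * e n ∈ Submodule.span ℂ ({e 3} : Set A)) :
    e (n - 2) * e (n - 1) = 0 ∧ e (n - 2) * e n = 0 ∧
    e (n - 1) * e 1 = 0 ∧ e (n - 1) * e (n - 2) = 0 ∧
    e n * e 1 = 0 ∧ e n * e (n - 2) = 0 ∧ e n * e (n - 1) = 0 ∧ e n * e n = 0 ∧
    e (n - 2) * e 1 ∈ Submodule.span ℂ {e (n - 1), e n} ∧
    e (n - 2) * e (n - 2) ∈ Submodule.span ℂ {e (n - 1), e n} ∧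
    e (n - 1) * e (n - 1) = 0 ∧ e (n - 1) * e n = 0 ∧
    (∀ i : ℕ, 1 ≤ i → i ≤ n - 3 → e (n - 1) * e i = 0 ∧ e n * e i = 0) ∧
    (∀ j : ℕ, 2 ≤ j → j ≤ n - 3 → e (n - 2) * e j = 0) ∧
    ∃ β : Fin 4 → ℂ, ∃ φ : A ≃ₗ[ℂ] (Fin n → ℂ),
      ∀ x y : A, φ (x * y) = Bmul n β (φ x) (φ y) := by
  obtain ⟨N, rfl⟩ : ∃ N, n = N + 3 := ⟨n - 3, by omega⟩
  have n3 : N + 3 - 3 = N := by omega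
  have n2 : N + 3 - 2 = N + 1 := by omega
  have n1 : N + 3 - 1 = N + 2 := by omega
  rw [n3] at h2
  rw [n2, n1] at h3
  simp only [n1, n2, n3] at h4 g1 g2 g3 g4 g5 g6 g8 g9 ⊢
  replace h1 : ∀ i : ℕ, 1 ≤ i → i + 1 ≤ N → e 1 * e i = e (i + 1) :=
    fun i hi hi' => h1 i hi (by omega)
  have ne (m : ℕ) (hm : m < N + 3) : e (m + 1) ≠ 0 := hli.ne_zero ⟨m, hm⟩
  have l2 : e 1 * e 2 ≠ 0 := by
    rw [h1 2 (by omega) (by omega)]; exact ne 2 (by omega)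
  have l3 : e 1 * e 3 ≠ 0 := by
    rw [h1 3 (by omega) (by omega)]; exact ne 3 (by omega)
  have r3 : e 3 * e 1 ≠ 0 := by
    rw [chain_mul_s11 h1 3 1 (by omega) le_rfl (by omega)]; exact ne 3 (by omega)
  have lz (w : A) : e 1 * (e (N + 3) * w) = 0 := by rw [← mul_assoc, h5, zero_mul]
  have ly (w : A) : e 1 * (e (N + 2) * w) = 0 := by rw [← mul_assoc, h4, zero_mul]
  have yw (w : A) : e (N + 2) * w = e 1 * (e (N + 1) * w) := by rw [← h3, mul_assoc]
  have za := eq_zero_of_mul_left g7 l3 (lz _)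
  have zx := eq_zero_of_mul_left g8 l3 (lz _)
  have zy := eq_zero_of_mul_left g9 l3 (lz _)
  have zz := eq_zero_of_mul_left g10 l3 (lz _)
  have ya := eq_zero_of_mul_left g5 l3 (ly _)
  have yx := eq_zero_of_mul_left g6 l3 (ly _)
  obtain ⟨b₀, b₁, xa⟩ := exists_smul_add_smul g1 l2 h4 h5 (by rw [← yw, ya])
  obtain ⟨b₂, b₃, xx⟩ := exists_smul_add_smul g2 l2 h4 h5 (by rw [← yw, yx])
  have xy : e (N + 1) * e (N + 2) = 0 := by
    rw [← h3, ← mul_assoc, xa, add_mul, smul_mul_assoc, smul_mul_assoc, yx, zx]; simp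
  have xz : e (N + 1) * e (N + 3) = 0 :=
    eq_zero_of_mul_right g4 r3 (by rw [mul_assoc, za, mul_zero])
  have yy : e (N + 2) * e (N + 2) = 0 := by rw [yw, xy, mul_zero]
  have yz : e (N + 2) * e (N + 3) = 0 := by rw [yw, xz, mul_zero]
  have yi := mul_chain_eq_zero h1 ya
  have zi := mul_chain_eq_zero h1 za
  have xj (j : ℕ) (hj : 2 ≤ j) (hjN : j ≤ N) : e (N + 1) * e j = 0 := by
    obtain ⟨k, rfl⟩ : ∃ k, j = k + 1 := ⟨j - 1, by omega⟩
    rw [← h1 k (by omega) hjN, ← mul_assoc, xa, add_mul, smul_mul_assoc, smul_mul_assoc,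
      yi k (by omega) (by omega), zi k (by omega) (by omega)]
    simp
  have ix := chain_mul_of_sq (w := e (N + 1)) h1 (by rw [h3, h4])
  have iy (i : ℕ) (hi : 1 ≤ i) (hiN : i ≤ N) : e i * e (N + 2) = 0 := by
    rcases hi.eq_or_lt with rfl | hi
    · exact h4
    · exact chain_mul_of_sq h1 (by rw [h4, mul_zero]) i hi hiN
  have iz (i : ℕ) (hi : 1 ≤ i) (hiN : i ≤ N) : e i * e (N + 3) = 0 := by
    rcases hi.eq_or_lt with rfl | hi
    · exact h5
    · exact chain_mul_of_sq h1 (by rw [h5, mul_zero]) i hi hiN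
  refine ⟨xy, xz, ya, yx, za, zx, zy, zz, Submodule.mem_span_pair.2 ⟨b₀, b₁, xa.symm⟩,
    Submodule.mem_span_pair.2 ⟨b₂, b₃, xx.symm⟩, yy, yz,
    fun i hi hi' => ⟨yi i hi hi', zi i hi hi'⟩, xj, ?_⟩
  let b := Module.Basis.mk hli hsp.ge
  have hb (i : Fin (N + 3)) : b i = e (i.1 + 1) := Module.Basis.mk_apply hli hsp.ge i
  have hφ (m : ℕ) (hm : m < N + 3) : b.equivFun (e (m + 1)) = bvec (N + 3) m hm := by
    have := hb ⟨m, hm⟩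
    simp only at this
    rw [← this, bvec, Module.Basis.equivFun_apply, Module.Basis.repr_self,
      Finsupp.single_eq_pi_single]
  refine ⟨![b₀, b₁, b₂, b₃], b.equivFun, map_mul_of_table b ?_⟩
  rintro ⟨i, hi⟩ ⟨j, hj⟩
  simp only [hb, Bbasis, n3]
  split_ifs with c1 c2 c3 c4
  · rw [chain_mul_s11 h1 _ _ (by omega) (by omega) (by omega), ← hφ]
    congr 2; omega
  · obtain ⟨rfl, rfl⟩ := c2
    rw [← hφ]
    exact congrArg b.equivFun h3
  · obtain ⟨rfl, rfl⟩ := c3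
    rw [← hφ, ← hφ, xa, map_add, map_smul, map_smul]; rfl
  · obtain ⟨rfl, rfl⟩ := c4
    rw [← hφ, ← hφ, xx, map_add, map_smul, map_smul]; rfl
  · suffices e (i + 1) * e (j + 1) = 0 by rw [this, map_zero]
    have hi4 : i + 1 ≤ N ∨ i = N ∨ i = N + 1 ∨ i = N + 2 := by omega
    have hj4 : j + 1 ≤ N ∨ j = N ∨ j = N + 1 ∨ j = N + 2 := by omega
    rcases hi4 with hi' | rfl | rfl | rfl
    · rcases hj4 with hj' | rfl | rfl | rfl
      · exact chain_mul_eq_zero_s11 h1 h2 _ _ (by omega) hi' hj' (by omega)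
      · exact ix _ (by omega) hi'
      · exact iy _ (by omega) hi'
      · exact iz _ (by omega) hi'
    · rcases hj4 with hj' | rfl | rfl | rfl
      · exact xj _ (by omega) hj'
      · omega
      · exact xy
      · exact xz
    · rcases hj4 with hj' | rfl | rfl | rfl
      · exact yi _ (by omega) hj'
      · exact yx
      · exact yy
      · exact yz
    · rcases hj4 with hj' | rfl | rfl | rfl
      · exact zi _ (by omega) hj'
      · exact zx
      · exact zy
      · exact zz
end

section
/- For every integer n ≥ 7 and every choice of parameters (β₁,β₂,β₃,β₄) ∈ ℂ⁴, the multiplication table of B(β₁,β₂,β₃,β₄) defines an associative multiplication, and the resulting n-dimensional algebra A is nilpotent of nilindex n−3: writing A¹ = A and A^{k+1} = A^k·A, one has A^{n−3} = span{e_{n−3}} ≠ 0 and A^{n−2} = 0. -/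
/-- Powers of the algebra `B(β)`:  `Bpow n β k` formalizes `A^{k+1}`, i.e.
`Bpow n β 0 = A¹ = A` and `Bpow n β (k+1) = span {x·y | x ∈ A^{k+1}, y ∈ A}`. -/
noncomputable def Bpow (n : ℕ) (β : Fin 4 → ℂ) : ℕ → Submodule ℂ (Fin n → ℂ)
  | 0 => ⊤
  | k + 1 => Submodule.span ℂ {z : Fin n → ℂ | ∃ x ∈ Bpow n β k, ∃ y : Fin n → ℂ, z = Bmul n β x y}

/-- The multiplication `Bmul` as a bilinear map. -/
noncomputable def BmulL (n : ℕ) (β : Fin 4 → ℂ) :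
    (Fin n → ℂ) →ₗ[ℂ] (Fin n → ℂ) →ₗ[ℂ] (Fin n → ℂ) :=
  LinearMap.mk₂ ℂ (Bmul n β)
    (by intro x x' y; simp [Bmul, add_mul, add_smul, Finset.sum_add_distrib])
    (by intro c x y; simp [Bmul, mul_assoc, mul_smul, Finset.smul_sum])
    (by intro x y y'; simp [Bmul, mul_add, add_smul, Finset.sum_add_distrib])
    (by intro c x y; simp [Bmul, mul_left_comm, mul_smul, Finset.smul_sum])

lemma BmulL_apply (n : ℕ) (β : Fin 4 → ℂ) (x y : Fin n → ℂ) :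
    BmulL n β x y = Bmul n β x y := rfl

lemma BmulL_bvec (n : ℕ) (β : Fin 4 → ℂ) (i j : ℕ) (hi : i < n) (hj : j < n) :
    BmulL n β (bvec n i hi) (bvec n j hj) = Bbasis n β ⟨i, hi⟩ ⟨j, hj⟩ := by
  rw [BmulL_apply, Bmul, Finset.sum_eq_single ⟨i, hi⟩, Finset.sum_eq_single ⟨j, hj⟩]
  · simp [bvec]
  · intro b _ hb
    simp [bvec, hb]
  · simp
  · intro b _ hb
    simp [bvec, hb]
  · simp

lemma Bbasis_chain (n : ℕ) (β : Fin 4 → ℂ) (i j : Fin n) (h : i.1 + j.1 + 2 ≤ n - 3) :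
    Bbasis n β i j = bvec n (i.1 + j.1 + 1) (by omega) := by
  simp only [Bbasis, dif_pos h]

lemma Bbasis_eq_zero (n : ℕ) (β : Fin 4 → ℂ) (i j : Fin n) (h : ¬ i.1 + j.1 + 2 ≤ n - 3)
    (h1 : ¬ (i.1 = 0 ∧ j.1 = n - 3)) (h2 : ¬ (i.1 = n - 3 ∧ j.1 = 0))
    (h3 : ¬ (i.1 = n - 3 ∧ j.1 = n - 3)) : Bbasis n β i j = 0 := by
  simp only [Bbasis, dif_neg h, if_neg h1, if_neg h2, if_neg h3]

/-- Outside the chain, products of basis vectors lie in `span{e_{n-1}, e_n}`. -/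
lemma Bbasis_off_chain (n : ℕ) (hn : 7 ≤ n) (β : Fin 4 → ℂ) (i j : Fin n)
    (h : ¬ i.1 + j.1 + 2 ≤ n - 3) :
    ∃ a b : ℂ, Bbasis n β i j =
      a • bvec n (n - 2) (by omega) + b • bvec n (n - 1) (by omega) := by
  unfold Bbasis
  rw [dif_neg h]
  split_ifs
  · exact ⟨1, 0, by simp⟩
  · exact ⟨_, _, rfl⟩
  · exact ⟨_, _, rfl⟩
  · exact ⟨0, 0, by simp⟩

lemma Bmul_assoc_basis (n : ℕ) (hn : 7 ≤ n) (β : Fin 4 → ℂ) (i j k : Fin n) :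
    BmulL n β (Bbasis n β i j) (bvec n k k.2) = BmulL n β (bvec n i i.2) (Bbasis n β j k) := by
  have hi := i.2
  have hk := k.2
  -- `e_{n-1}` and `e_n` annihilate the algebra on both sides.
  have left_zero : ∀ m (hm : m < n), n - 2 ≤ m →
      BmulL n β (bvec n m hm) (bvec n k k.2) = 0 := fun m hm h => by
    rw [BmulL_bvec]
    apply Bbasis_eq_zero <;> simp only <;> omega
  have right_zero : ∀ m (hm : m < n), n - 2 ≤ m →
      BmulL n β (bvec n i i.2) (bvec n m hm) = 0 := fun m hm h => by
    rw [BmulL_bvec]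
    apply Bbasis_eq_zero <;> simp only <;> omega
  by_cases hij : i.1 + j.1 + 2 ≤ n - 3
  · rw [Bbasis_chain n β i j hij, BmulL_bvec]
    by_cases hjk : j.1 + k.1 + 2 ≤ n - 3
    · rw [Bbasis_chain n β j k hjk, BmulL_bvec]
      by_cases hs : i.1 + j.1 + k.1 + 3 ≤ n - 3
      · rw [Bbasis_chain _ _ _ _ (by simp only; omega), Bbasis_chain _ _ _ _ (by simp only; omega)]
        congr 1
        simp only
        omega
      · rw [Bbasis_eq_zero, Bbasis_eq_zero] <;> simp only <;> omega
    · obtain ⟨a, b, hab⟩ := Bbasis_off_chain n hn β j k hjk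
      rw [hab, map_add, map_smul, map_smul, right_zero _ _ (by omega), right_zero _ _ (by omega),
        Bbasis_eq_zero]
      · simp
      all_goals simp only; omega
  · obtain ⟨a, b, hab⟩ := Bbasis_off_chain n hn β i j hij
    rw [hab, map_add, map_smul, map_smul, LinearMap.add_apply, LinearMap.smul_apply,
      LinearMap.smul_apply, left_zero _ _ (by omega), left_zero _ _ (by omega)]
    by_cases hjk : j.1 + k.1 + 2 ≤ n - 3
    · rw [Bbasis_chain n β j k hjk, BmulL_bvec, Bbasis_eq_zero]
      · simp
      all_goals simp only; omega
    · obtain ⟨c, d, hcd⟩ := Bbasis_off_chain n hn β j k hjk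
      rw [hcd, map_add, map_smul, map_smul, right_zero _ _ (by omega), right_zero _ _ (by omega)]
      simp

lemma Bmul_assoc (n : ℕ) (hn : 7 ≤ n) (β : Fin 4 → ℂ) (x y z : Fin n → ℂ) :
    Bmul n β (Bmul n β x y) z = Bmul n β x (Bmul n β y z) := by
  simp only [← BmulL_apply]
  have hsum : ∀ w : Fin n → ℂ, w = ∑ i, w i • bvec n i.1 i.2 := fun w => by
    simpa [bvec] using pi_eq_sum_univ' w
  rw [hsum x, hsum y, hsum z]
  simp only [map_sum, LinearMap.sum_apply, map_smul, LinearMap.smul_apply, BmulL_bvec,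
    Bmul_assoc_basis n hn β]

lemma Bmul_apply (n : ℕ) (β : Fin 4 → ℂ) (x y : Fin n → ℂ) (l : Fin n) :
    Bmul n β x y l = ∑ i, ∑ j, x i * y j * Bbasis n β i j l := by
  simp [Bmul, Finset.sum_apply]

/-- No product has an `e₁` or `e_{n-2}` component. -/
lemma Bbasis_apply_eq_zero (n : ℕ) (hn : 7 ≤ n) (β : Fin 4 → ℂ) (i j l : Fin n)
    (hl : l.1 = 0 ∨ l.1 = n - 3) : Bbasis n β i j l = 0 := by
  by_cases h : i.1 + j.1 + 2 ≤ n - 3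
  · rw [Bbasis_chain n β i j h, bvec, Pi.single_eq_of_ne]
    rw [Ne, Fin.ext_iff]
    simp only
    omega
  · obtain ⟨a, b, hab⟩ := Bbasis_off_chain n hn β i j h
    have h2 : l ≠ ⟨n - 2, by omega⟩ := by rw [Ne, Fin.ext_iff]; simp only; omega
    have h1 : l ≠ ⟨n - 1, by omega⟩ := by rw [Ne, Fin.ext_iff]; simp only; omega
    simp [hab, bvec, h1, h2]

/-- If `x` has no `e_{n-2}` component and no components `e₁, …, e_m` (`m ≥ 1`), then `x y` lies in
the chain and has no components `e₁, …, e_{m+1}`. -/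
lemma Bmul_apply_eq_zero (n : ℕ) (hn : 7 ≤ n) (β : Fin 4 → ℂ) (m : ℕ) (hm : 1 ≤ m)
    (x y : Fin n → ℂ) (hx : ∀ i : Fin n, i.1 < m ∨ i.1 = n - 3 → x i = 0)
    (l : Fin n) (hl : l.1 < m + 1 ∨ n - 3 ≤ l.1) : Bmul n β x y l = 0 := by
  rw [Bmul_apply]
  refine Finset.sum_eq_zero fun i _ => Finset.sum_eq_zero fun j _ => ?_
  by_cases hi : i.1 < m ∨ i.1 = n - 3
  · rw [hx i hi]; simp
  by_cases h : i.1 + j.1 + 2 ≤ n - 3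
  · rw [Bbasis_chain n β i j h, bvec, Pi.single_eq_of_ne, mul_zero]
    rw [Ne, Fin.ext_iff]
    simp only
    omega
  · rw [Bbasis_eq_zero n β i j h (by omega) (by omega) (by omega)]
    simp

/-- A coordinate vanishing on all products `x y`, `x ∈ A^{k+1}`, vanishes on `A^{k+2}`. -/
lemma Bpow_succ_apply_eq_zero (n : ℕ) (β : Fin 4 → ℂ) (k : ℕ) (l : Fin n)
    (h : ∀ x ∈ Bpow n β k, ∀ y, Bmul n β x y l = 0) :
    ∀ z ∈ Bpow n β (k + 1), z l = 0 := by
  have hle : Bpow n β (k + 1) ≤ LinearMap.ker (LinearMap.proj (R := ℂ) (φ := fun _ => ℂ) l) := by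
    rw [Bpow, Submodule.span_le]
    rintro z ⟨x, hx, y, rfl⟩
    exact h x hx y
  exact fun z hz => hle hz

/-- `A^{k+3} ⊆ span{e_{k+3}, …, e_{n-3}}`. -/
lemma Bpow_apply_eq_zero (n : ℕ) (hn : 7 ≤ n) (β : Fin 4 → ℂ) (k : ℕ) :
    ∀ z ∈ Bpow n β (k + 2), ∀ l : Fin n, l.1 < k + 2 ∨ n - 3 ≤ l.1 → z l = 0 := by
  induction k with
  | zero =>
    intro z hz l hl
    refine Bpow_succ_apply_eq_zero n β 1 l (fun x hx y => ?_) z hz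
    refine Bmul_apply_eq_zero n hn β 1 le_rfl x y (fun i hi => ?_) l hl
    refine Bpow_succ_apply_eq_zero n β 0 i (fun x _ y => ?_) x hx
    rw [Bmul_apply]
    refine Finset.sum_eq_zero fun i' _ => Finset.sum_eq_zero fun j _ => ?_
    rw [Bbasis_apply_eq_zero n hn β i' j i (by omega), mul_zero]
  | succ k ih =>
    intro z hz l hl
    refine Bpow_succ_apply_eq_zero n β (k + 2) l (fun x hx y => ?_) z hz
    exact Bmul_apply_eq_zero n hn β (k + 2) (by omega) x y
      (fun i hi => ih x hx i (by omega)) l (by omega)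

lemma bvec_mem_Bpow (n : ℕ) (hn : 7 ≤ n) (β : Fin 4 → ℂ) (k : ℕ) (hk : k ≤ n - 4) :
    bvec n k (by omega) ∈ Bpow n β k := by
  induction k with
  | zero => exact Submodule.mem_top
  | succ k ih =>
    refine Submodule.subset_span ⟨_, ih (by omega), bvec n 0 (by omega), ?_⟩
    rw [← BmulL_apply, BmulL_bvec, Bbasis_chain _ _ _ _ (by simp only; omega)]
    rfl

/-- For every `n ≥ 7` and `β ∈ ℂ⁴` the multiplication of `B(β₁,…,β₄)` is
associative, and the resulting algebra is nilpotent of nilindex `n-3`: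
`A^{n-3} = span{e_{n-3}} ≠ 0` and `A^{n-2} = 0`. -/
theorem Bmul_associative_and_nilindex (n : ℕ) (hn : 7 ≤ n) (β : Fin 4 → ℂ) :
    (∀ x y z : Fin n → ℂ, Bmul n β (Bmul n β x y) z = Bmul n β x (Bmul n β y z)) ∧
    Bpow n β (n - 4) = Submodule.span ℂ {bvec n (n - 4) (by omega)} ∧
    Bpow n β (n - 4) ≠ ⊥ ∧
    Bpow n β (n - 3) = ⊥ := by
  have hmem := bvec_mem_Bpow n hn β (n - 4) le_rfl
  refine ⟨Bmul_assoc n hn β, le_antisymm ?_ ?_, ?_, ?_⟩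
  · intro z hz
    obtain ⟨k, hk⟩ : ∃ k, n - 4 = k + 2 := ⟨n - 6, by omega⟩
    rw [hk] at hz
    refine Submodule.mem_span_singleton.2 ⟨z ⟨n - 4, by omega⟩, ?_⟩
    ext l
    by_cases hl : l = ⟨n - 4, by omega⟩
    · subst hl
      simp [bvec]
    · have hl' : l.1 ≠ n - 4 := fun h => hl (Fin.ext h)
      rw [Bpow_apply_eq_zero n hn β k z hz l (by omega)]
      simp [bvec, hl]
  · rw [Submodule.span_singleton_le_iff_mem]
    exact hmem
  · intro h
    rw [h, Submodule.mem_bot] at hmem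
    simpa [bvec] using congrFun hmem ⟨n - 4, by omega⟩
  · rw [Submodule.eq_bot_iff]
    intro z hz
    obtain ⟨k, hk⟩ : ∃ k, n - 3 = k + 2 := ⟨n - 5, by omega⟩
    rw [hk] at hz
    ext l
    exact Bpow_apply_eq_zero n hn β k z hz l (by omega)
end

section
/- Let n ≥ 7. Every algebra of the family B(β₁,β₂,β₃,β₄) with (β₂,β₄) ≠ (0,0) is isomorphic as a non-unital ℂ-algebra to at least one of the following algebras: B(0,1,0,0); B(0,1,1,0); B(1,0,0,1); B(β,1,0,1) for some β ∈ ℂ. -/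
/-!
Write `x = e_{n-2}`, `y = e_{n-1}`, `z = e_n`. Replacing the generators by `e₁ + s x` and `p x`
(with `p ≠ 0`) and re-choosing the basis of `⟨y, z⟩` accordingly keeps the algebra in the family;
`BIso.of_change` records the resulting relations between the old and new parameters. In
coordinates the change of basis only alters `e₁`, `e₂` and the last three vectors, so that
multiplicativity amounts to comparing, in the last two coordinates, the coefficients of the four
monomials in the `e₁`- and `x`-coordinates of the two factors.

If `β₄ ≠ 0`, put `α = β₁ - β₂β₃/β₄` and `γ = β₂/β₄`, so that `x e₁ = α (e₁ x) + γ (x x)`. The change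
of generators leads to `B(α, (γ + s(1 - α))/p, 0, 1)`, and `s`, `p` can be chosen to make the second
parameter `1`, unless `α = 1` and `γ = 0`, where it is `0`. If `β₄ = 0`, then `β₂ ≠ 0`, the vector
`x e₁` can serve as the new `z`, and rescaling `x` normalises `β₃` to `0` or `1`.
-/

/-- The null-filiform part of the product, in the coordinates of `e₁, …, e_{n-3}`. -/
theorem Bmul_apply_low (n : ℕ) (β : Fin 4 → ℂ) (x y : Fin n → ℂ) (k : Fin n)
    (hk : k.1 < n - 3) :
    Bmul n β x y k = ∑ i : Fin n, ∑ j : Fin n, if i.1 + j.1 + 1 = k.1 then x i * y j else 0 := by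
  simp only [Bmul, Finset.sum_apply, Pi.smul_apply, smul_eq_mul]
  refine Finset.sum_congr rfl fun i _ => Finset.sum_congr rfl fun j _ => ?_
  unfold Bbasis bvec
  have := i.2
  split_ifs <;> simp [Pi.single_apply, Fin.ext_iff] <;> grind

theorem Bmul_apply_one (n : ℕ) (hn : 7 ≤ n) (β : Fin 4 → ℂ) (x y : Fin n → ℂ) :
    Bmul n β x y ⟨1, by omega⟩ = x ⟨0, by omega⟩ * y ⟨0, by omega⟩ := by
  rw [Bmul_apply_low n β x y _ (by simp; omega)]
  rw [Finset.sum_eq_single ⟨0, by omega⟩, Finset.sum_eq_single ⟨0, by omega⟩]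
  · simp
  · intro j _ hj
    rw [if_neg]
    simp only [ne_eq, Fin.ext_iff] at hj ⊢
    omega
  · simp
  · intro i _ hi
    refine Finset.sum_eq_zero fun j _ => ?_
    rw [if_neg]
    simp only [ne_eq, Fin.ext_iff] at hi ⊢
    omega
  · simp

theorem Bmul_apply_zero (n : ℕ) (hn : 7 ≤ n) (β : Fin 4 → ℂ) (x y : Fin n → ℂ) :
    Bmul n β x y ⟨0, by omega⟩ = 0 := by
  rw [Bmul_apply_low n β x y _ (by simp; omega)]
  simp

theorem Bmul_apply_sub_three (n : ℕ) (hn : 7 ≤ n) (β : Fin 4 → ℂ) (x y : Fin n → ℂ) :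
    Bmul n β x y ⟨n - 3, by omega⟩ = 0 := by
  simp only [Bmul, Finset.sum_apply, Pi.smul_apply, smul_eq_mul]
  refine Finset.sum_eq_zero fun i _ => Finset.sum_eq_zero fun j _ => ?_
  unfold Bbasis bvec
  split_ifs <;> simp [Pi.single_apply, Fin.ext_iff] <;> grind

theorem Bmul_apply_sub_two (n : ℕ) (hn : 7 ≤ n) (β : Fin 4 → ℂ) (x y : Fin n → ℂ) :
    Bmul n β x y ⟨n - 2, by omega⟩ =
      x ⟨0, by omega⟩ * y ⟨n - 3, by omega⟩ + β 0 * (x ⟨n - 3, by omega⟩ * y ⟨0, by omega⟩)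
        + β 2 * (x ⟨n - 3, by omega⟩ * y ⟨n - 3, by omega⟩) := by
  have key : ∀ i j : Fin n, x i * y j * Bbasis n β i j ⟨n - 2, by omega⟩ =
      (if j = ⟨n - 3, by omega⟩ then if i = ⟨0, by omega⟩ then x i * y j else 0 else 0)
      + (if j = ⟨0, by omega⟩ then if i = ⟨n - 3, by omega⟩ then β 0 * (x i * y j) else 0 else 0)
      + (if j = ⟨n - 3, by omega⟩ then
          if i = ⟨n - 3, by omega⟩ then β 2 * (x i * y j) else 0 else 0) := by
    intro i j
    unfold Bbasis bvec
    simp only [Fin.ext_iff]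
    split_ifs <;> simp [Pi.single_apply, Fin.ext_iff] <;> grind
  simp only [Bmul, Finset.sum_apply, Pi.smul_apply, smul_eq_mul, key, Finset.sum_add_distrib]
  simp

theorem Bmul_apply_sub_one (n : ℕ) (hn : 7 ≤ n) (β : Fin 4 → ℂ) (x y : Fin n → ℂ) :
    Bmul n β x y ⟨n - 1, by omega⟩ =
      β 1 * (x ⟨n - 3, by omega⟩ * y ⟨0, by omega⟩)
        + β 3 * (x ⟨n - 3, by omega⟩ * y ⟨n - 3, by omega⟩) := by
  have key : ∀ i j : Fin n, x i * y j * Bbasis n β i j ⟨n - 1, by omega⟩ =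
      (if j = ⟨0, by omega⟩ then if i = ⟨n - 3, by omega⟩ then β 1 * (x i * y j) else 0 else 0)
      + (if j = ⟨n - 3, by omega⟩ then
          if i = ⟨n - 3, by omega⟩ then β 3 * (x i * y j) else 0 else 0) := by
    intro i j
    unfold Bbasis bvec
    simp only [Fin.ext_iff]
    split_ifs <;> simp [Pi.single_apply, Fin.ext_iff] <;> grind
  simp only [Bmul, Finset.sum_apply, Pi.smul_apply, smul_eq_mul, key, Finset.sum_add_distrib]
  simp

/-- The linear map `e₁ ↦ e₁ + s x`, `x ↦ p x` in coordinates: `u, u'` are the components of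
the image of `e₂` along `y, z`, and `m₁₁, m₁₂, m₂₁, m₂₂` is the matrix of the map on `⟨y, z⟩`. -/
noncomputable def changeMap (n : ℕ) (hn : 7 ≤ n) (s p u u' m₁₁ m₁₂ m₂₁ m₂₂ : ℂ) :
    (Fin n → ℂ) →ₗ[ℂ] (Fin n → ℂ) where
  toFun x k :=
    if k.1 < n - 3 then x k
    else if k.1 = n - 3 then s * x ⟨0, by omega⟩ + p * x ⟨n - 3, by omega⟩
    else if k.1 = n - 2 then
      m₁₁ * x ⟨n - 2, by omega⟩ + m₁₂ * x ⟨n - 1, by omega⟩ + u * x ⟨1, by omega⟩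
    else m₂₁ * x ⟨n - 2, by omega⟩ + m₂₂ * x ⟨n - 1, by omega⟩ + u' * x ⟨1, by omega⟩
  map_add' x y := by
    ext k
    simp only [Pi.add_apply]
    split_ifs <;> ring
  map_smul' c x := by
    ext k
    simp only [Pi.smul_apply, smul_eq_mul, RingHom.id_apply]
    split_ifs <;> ring

/-- The parameter relations under which passing to the generators `e₁ + s x`, `p x` and to the
basis `(m₁₁ y + m₂₁ z, m₁₂ y + m₂₂ z)` of `⟨y, z⟩` turns `B(β)` into `B(β')`. -/
theorem BIso.of_change (n : ℕ) (hn : 7 ≤ n) (β β' : Fin 4 → ℂ) (s p m₁₁ m₁₂ m₂₁ m₂₂ : ℂ)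
    (hp : p ≠ 0) (hdet : m₁₁ * m₂₂ - m₁₂ * m₂₁ ≠ 0)
    (h₁ : m₁₁ = p + β 2 * s * p) (h₂ : m₂₁ = β 3 * s * p)
    (h₃ : m₁₁ * β' 0 + m₁₂ * β' 1 = β 0 * p + β 2 * p * s)
    (h₄ : m₂₁ * β' 0 + m₂₂ * β' 1 = β 1 * p + β 3 * p * s)
    (h₅ : m₁₁ * β' 2 + m₁₂ * β' 3 = β 2 * p ^ 2)
    (h₆ : m₂₁ * β' 2 + m₂₂ * β' 3 = β 3 * p ^ 2) : BIso n β β' := by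
  -- `e₂` must go to the square of `e₁ + s x`, which fixes its `y`- and `z`-components.
  set ψ := changeMap n hn s p (s + β 0 * s + β 2 * s ^ 2) (β 1 * s + β 3 * s ^ 2)
    m₁₁ m₁₂ m₂₁ m₂₂ with hψ
  have low : ∀ x (k : Fin n), k.1 < n - 3 → ψ x k = x k := by
    intro x k hk
    simp [hψ, changeMap, hk]
  have c0 : ∀ x, ψ x ⟨0, by omega⟩ = x ⟨0, by omega⟩ := fun x => low x _ (by simp; omega)
  have c3 : ∀ x, ψ x ⟨n - 3, by omega⟩ = s * x ⟨0, by omega⟩ + p * x ⟨n - 3, by omega⟩ := by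
    intro x
    simp [hψ, changeMap]
  have c2 : ∀ x, ψ x ⟨n - 2, by omega⟩ = m₁₁ * x ⟨n - 2, by omega⟩ + m₁₂ * x ⟨n - 1, by omega⟩
      + (s + β 0 * s + β 2 * s ^ 2) * x ⟨1, by omega⟩ := by
    intro x
    have e1 : ¬ (n - 2 < n - 3) := by omega
    have e2 : ¬ (n - 2 = n - 3) := by omega
    simp [hψ, changeMap, e1, e2]
  have cl : ∀ x, ψ x ⟨n - 1, by omega⟩ = m₂₁ * x ⟨n - 2, by omega⟩ + m₂₂ * x ⟨n - 1, by omega⟩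
      + (β 1 * s + β 3 * s ^ 2) * x ⟨1, by omega⟩ := by
    intro x
    have e1 : ¬ (n - 1 < n - 3) := by omega
    have e2 : ¬ (n - 1 = n - 3) := by omega
    have e3 : ¬ (n - 1 = n - 2) := by omega
    simp [hψ, changeMap, e1, e2, e3]
  have cases : ∀ k : Fin n, k.1 < n - 3 ∨ k = ⟨n - 3, by omega⟩ ∨ k = ⟨n - 2, by omega⟩
      ∨ k = ⟨n - 1, by omega⟩ := by
    intro k
    simp only [Fin.ext_iff]
    omega
  have hinj : Function.Injective ψ := by
    rw [← LinearMap.ker_eq_bot, LinearMap.ker_eq_bot']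
    intro x hx
    have hlow : ∀ k : Fin n, k.1 < n - 3 → x k = 0 := by
      intro k hk
      rw [← low x k hk, hx]
      rfl
    have x0 : x ⟨0, by omega⟩ = 0 := hlow _ (by simp; omega)
    have x1 : x ⟨1, by omega⟩ = 0 := hlow _ (by simp; omega)
    have d3 := c3 x
    have d2 := c2 x
    have dl := cl x
    rw [hx] at d3 d2 dl
    simp only [Pi.zero_apply, x0, x1, mul_zero, zero_add, add_zero] at d3 d2 dl
    ext k
    rcases cases k with hk | rfl | rfl | rfl
    · exact hlow k hk
    · simpa [hp] using d3.symm
    · refine (mul_eq_zero.1 (?_ : (m₁₁ * m₂₂ - m₁₂ * m₂₁) * _ = 0)).resolve_left hdet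
      linear_combination m₁₂ * dl - m₂₂ * d2
    · refine (mul_eq_zero.1 (?_ : (m₁₁ * m₂₂ - m₁₂ * m₂₁) * _ = 0)).resolve_left hdet
      linear_combination m₂₁ * d2 - m₁₁ * dl
  have hmul : ∀ x y, ψ (Bmul n β' x y) = Bmul n β (ψ x) (ψ y) := by
    intro x y
    ext k
    rcases cases k with hk | rfl | rfl | rfl
    · rw [low _ k hk, Bmul_apply_low _ _ _ _ _ hk, Bmul_apply_low _ _ _ _ _ hk]
      refine Finset.sum_congr rfl fun i _ => Finset.sum_congr rfl fun j _ => ?_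
      split_ifs with h
      · rw [low x i (by omega), low y j (by omega)]
      · rfl
    · rw [c3, Bmul_apply_zero n hn, Bmul_apply_sub_three n hn, Bmul_apply_sub_three n hn]
      ring
    · rw [c2, Bmul_apply_sub_two n hn, Bmul_apply_sub_two n hn, Bmul_apply_sub_one n hn,
        Bmul_apply_one n hn, c0, c0, c3, c3]
      linear_combination (x ⟨0, by omega⟩ * y ⟨n - 3, by omega⟩) * h₁
        + (x ⟨n - 3, by omega⟩ * y ⟨0, by omega⟩) * h₃
        + (x ⟨n - 3, by omega⟩ * y ⟨n - 3, by omega⟩) * h₅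
    · rw [cl, Bmul_apply_sub_one n hn, Bmul_apply_sub_two n hn, Bmul_apply_sub_one n hn,
        Bmul_apply_one n hn, c0, c3, c3]
      linear_combination (x ⟨0, by omega⟩ * y ⟨n - 3, by omega⟩) * h₂
        + (x ⟨n - 3, by omega⟩ * y ⟨0, by omega⟩) * h₄
        + (x ⟨n - 3, by omega⟩ * y ⟨n - 3, by omega⟩) * h₆
  let e := LinearEquiv.ofInjectiveEndo ψ hinj
  have he : ∀ x, e x = ψ x := fun x => rfl
  refine ⟨e.symm, fun x y => ?_⟩
  rw [LinearEquiv.symm_apply_eq, he, hmul, ← he, ← he, e.apply_symm_apply, e.apply_symm_apply]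

/-- The case `β₄ ≠ 0`: here `α` and `γ` are the coefficients in `x e₁ = α (e₁ x) + γ (x x)`. -/
theorem BIso.of_ne_zero (n : ℕ) (hn : 7 ≤ n) (β : Fin 4 → ℂ) (α γ s p b : ℂ) (hd : β 3 ≠ 0)
    (hp : p ≠ 0) (hα : β 0 = α + γ * β 2) (hγ : β 1 = γ * β 3)
    (hb : p * b = γ + s * (1 - α)) : BIso n β ![α, b, 0, 1] := by
  refine BIso.of_change n hn β _ s p (p + β 2 * s * p) (β 2 * p ^ 2) (β 3 * s * p) (β 3 * p ^ 2)
    hp ?_ rfl rfl ?_ ?_ ?_ ?_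
  · have : (p + β 2 * s * p) * (β 3 * p ^ 2) - β 2 * p ^ 2 * (β 3 * s * p) = β 3 * p ^ 3 := by
      ring
    rw [this]
    exact mul_ne_zero hd (pow_ne_zero _ hp)
  · simp
    linear_combination β 2 * p * hb - p * hα
  · simp
    linear_combination β 3 * p * hb - p * hγ
  · simp
  · simp

/-- **Theorem 3.6, existence part.** Every algebra `B(β₁,β₂,β₃,β₄)` with
`(β₂,β₄) ≠ (0,0)` is isomorphic to one of `B(0,1,0,0)`, `B(0,1,1,0)`, `B(1,0,0,1)`,
`B(β,1,0,1)` (`β ∈ ℂ`). -/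
theorem B_family_classification_exists (n : ℕ) (hn : 7 ≤ n) (β : Fin 4 → ℂ)
    (hβ : (β 1, β 3) ≠ (0, 0)) :
    BIso n β ![0, 1, 0, 0] ∨
    BIso n β ![0, 1, 1, 0] ∨
    BIso n β ![1, 0, 0, 1] ∨
    (∃ b : ℂ, BIso n β ![b, 1, 0, 1]) := by
  by_cases hd : β 3 = 0
  · have hb : β 1 ≠ 0 := fun h => hβ (by rw [h, hd])
    by_cases hc : β 2 = 0
    · left
      refine BIso.of_change n hn β _ 0 1 1 (β 0) 0 (β 1) one_ne_zero ?_ ?_ ?_ ?_ ?_ ?_ ?_ <;>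
        simp [hb, hc, hd]
    · right; left
      refine BIso.of_change n hn β _ 0 (β 2)⁻¹ (β 2)⁻¹ (β 0 * (β 2)⁻¹) 0 (β 1 * (β 2)⁻¹)
        (inv_ne_zero hc) ?_ ?_ ?_ ?_ ?_ ?_ ?_ <;> simp [hb, hc, hd]
      field_simp
  · right; right
    have hα : β 0 = (β 0 - β 1 / β 3 * β 2) + β 1 / β 3 * β 2 := by ring
    have hγ : β 1 = β 1 / β 3 * β 3 := by field_simp
    generalize β 0 - β 1 / β 3 * β 2 = α at hα
    generalize β 1 / β 3 = γ at hα hγ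
    by_cases h1 : α = 1
    · subst h1
      by_cases h2 : γ = 0
      · left
        exact BIso.of_ne_zero n hn β 1 γ 0 1 0 hd one_ne_zero hα hγ (by simp [h2])
      · right
        exact ⟨1, BIso.of_ne_zero n hn β 1 γ 0 γ 1 hd h2 hα hγ (by simp)⟩
    · right
      have h1' : 1 - α ≠ 0 := sub_ne_zero.2 (Ne.symm h1)
      refine ⟨α, BIso.of_ne_zero n hn β α γ ((1 - γ) / (1 - α)) 1 1 hd one_ne_zero hα hγ ?_⟩
      field_simp
      ring
end

section
/- Let n > 6 and let A be a non-unital associative ℂ-algebra with basis e₁, …, eₙ such that e₁·eᵢ = e_{i+1} for 1 ≤ i ≤ n−4, e₁·e_{n−3} = 0, e₁·e_{n−2} = e_{n−1}, e₁·e_{n−1} = 0, e₁·eₙ = 0, and suppose e_{n−2}·e₁ = a₁e₂ + a₂e_{n−1} and e_{n−2}·e_{n−2} = a₃e₂ + a₄e_{n−1} for scalars a₁, a₂, a₃, a₄ ∈ ℂ. Then a₁ = a₃ = 0; moreover e_{n−1}·e₁ = e_{n−1}·e_{n−2} = e_{n−2}·e_{n−1} = e_{n−1}·e_{n−1} = 0,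 e_{n−2}·eᵢ = 0 for 2 ≤ i ≤ n−3, and e_{n−1}·eᵢ = 0 for 2 ≤ i ≤ n−3. Consequently every product (with any bracketing) of k elements of span{e₁, e_{n−2}}, for k ≥ 3, lies in span{e_k} when k ≤ n−3 and equals 0 when k > n−3; in particular eₙ is not contained in the span of all products of three or more elements of span{e₁, e_{n−2}}. -/
/-!
Write `x = e₁`, `y = e_{n-2}`, `z = e_{n-1} = xy`, so that `eᵢ = xⁱ` for `i ≤ n-3`, `x^{n-2} = 0`,
and `x²y = xz = 0`. Multiplying the expressions for `yx` and `yy` on the left by `x²` gives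
`a₁x⁴ = 0` and `a₃x⁴ = 0`; since `n > 6`, `x⁴ = e₄` is a basis vector, so `a₁ = a₃ = 0`. Now `yx`
and `yy` are multiples of `z`, and every remaining vanishing product follows from `xz = 0` by
associativity.

Consequently a product of two elements of `span{x, y}` lies in `span{x², z}`. On these,
right multiplication by `x` gives `x³` and `0`, right multiplication by `y` gives `0` and `0`, and
`xᵏy = 0` for `k ≥ 2`; so longer products stay on the line `span{xᵏ}`
(`foldl_mul_mem_span_singleton`). All these lines avoid `eₙ` by linear independence.
-/

/-- If right multiplication by `x` shifts a sequence `E` from index `2` on and right multiplication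
by `y` kills it, then multiplying a multiple of `E k` on the right by `l.length` elements of
`span{x, y}` gives a multiple of `E (k + l.length)`. -/
theorem foldl_mul_mem_span_singleton {A : Type*} [NonUnitalRing A]
    [Module ℂ A] [SMulCommClass ℂ A A] [IsScalarTower ℂ A A] (E : ℕ → A) (x y : A)
    (hx : ∀ k, 2 ≤ k → E k * x = E (k + 1)) (hy : ∀ k, 2 ≤ k → E k * y = 0)
    (l : List A) (hl : ∀ b ∈ l, b ∈ Submodule.span ℂ {x, y}) (k : ℕ) (hk : 2 ≤ k) (a : A)
    (ha : a ∈ Submodule.span ℂ {E k}) :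
    l.foldl (· * ·) a ∈ Submodule.span ℂ {E (k + l.length)} := by
  induction l generalizing k a with
  | nil => simpa using ha
  | cons b l ih =>
    have hb := hl b (by simp)
    obtain ⟨c, rfl⟩ := Submodule.mem_span_singleton.1 ha
    obtain ⟨p, q, rfl⟩ := Submodule.mem_span_pair.1 hb
    have := ih (fun b hb => hl b (by simp [hb])) (k + 1) (by omega)
      ((c • E k) * (p • x + q • y)) (by
        refine Submodule.mem_span_singleton.2 ⟨p * c, ?_⟩
        simp [mul_add, hx k hk, hy k hk, smul_mul_assoc, mul_smul_comm, mul_smul])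
    rw [List.foldl_cons, List.length_cons, show k + (l.length + 1) = k + 1 + l.length by omega]
    exact this


/-- **case `r₁ = 1`, `r₂ ≥ 3`.** Let `n > 6` and let `A` be a non-unital
associative `ℂ`-algebra with basis `e₁, …, eₙ` adapted to `L_{e₁}` (Jordan blocks of sizes
`n-3, 2, 1`), and suppose `e_{n-2}e₁ = a₁e₂ + a₂e_{n-1}` and
`e_{n-2}e_{n-2} = a₃e₂ + a₄e_{n-1}`.  Then `a₁ = a₃ = 0`, the indicated products vanish,
and every (left-bracketed, hence by associativity arbitrary) product of `k ≥ 3` elements of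
`span{e₁, e_{n-2}}` lies in `span{e_k}` when `k ≤ n-3` and is `0` when `k > n-3`; in
particular `eₙ` is not in the span of all products of three or more elements of
`span{e₁, e_{n-2}}`. -/
theorem case_r1_one_r2_ge_three (n : ℕ) (hn : 6 < n) {A : Type*} [NonUnitalRing A]
    [Module ℂ A] [SMulCommClass ℂ A A] [IsScalarTower ℂ A A] (e : ℕ → A)
    (hli : LinearIndependent ℂ (fun i : Fin n => e (i.1 + 1)))
    (hsp : Submodule.span ℂ (Set.range fun i : Fin n => e (i.1 + 1)) = ⊤)
    (h1 : ∀ i : ℕ, 1 ≤ i → i ≤ n - 4 → e 1 * e i = e (i + 1))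
    (h2 : e 1 * e (n - 3) = 0)
    (h3 : e 1 * e (n - 2) = e (n - 1))
    (h4 : e 1 * e (n - 1) = 0)
    (h5 : e 1 * e n = 0)
    (a1 a2 a3 a4 : ℂ)
    (ha : e (n - 2) * e 1 = a1 • e 2 + a2 • e (n - 1))
    (hb : e (n - 2) * e (n - 2) = a3 • e 2 + a4 • e (n - 1)) :
    a1 = 0 ∧ a3 = 0 ∧
    e (n - 1) * e 1 = 0 ∧ e (n - 1) * e (n - 2) = 0 ∧
    e (n - 2) * e (n - 1) = 0 ∧ e (n - 1) * e (n - 1) = 0 ∧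
    (∀ i : ℕ, 2 ≤ i → i ≤ n - 3 → e (n - 2) * e i = 0) ∧
    (∀ i : ℕ, 2 ≤ i → i ≤ n - 3 → e (n - 1) * e i = 0) ∧
    (∀ (k : ℕ) (a : A) (l : List A), k = l.length + 1 → 3 ≤ k →
        a ∈ Submodule.span ℂ {e 1, e (n - 2)} →
        (∀ x ∈ l, x ∈ Submodule.span ℂ {e 1, e (n - 2)}) →
        (k ≤ n - 3 → l.foldl (· * ·) a ∈ Submodule.span ℂ ({e k} : Set A)) ∧
        (n - 3 < k → l.foldl (· * ·) a = 0)) ∧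
    e n ∉ Submodule.span ℂ {z : A | ∃ (a : A) (l : List A), 2 ≤ l.length ∧
        a ∈ Submodule.span ℂ {e 1, e (n - 2)} ∧
        (∀ x ∈ l, x ∈ Submodule.span ℂ {e 1, e (n - 2)}) ∧
        z = l.foldl (· * ·) a} := by
  obtain ⟨m, rfl⟩ : ∃ m, n = m + 3 := ⟨n - 3, by omega⟩
  simp only [show m + 3 - 4 = m - 1 by omega, show m + 3 - 3 = m by omega,
    show m + 3 - 2 = m + 1 by omega, show m + 3 - 1 = m + 2 by omega] at *
  have e2 : e 1 * e 1 = e 2 := h1 1 le_rfl (by omega)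
  have e3 : e 1 * e 2 = e 3 := h1 2 (by omega) (by omega)
  have e4 : e 1 * e 3 = e 4 := h1 3 (by omega) (by omega)
  have e4_ne : e 4 ≠ 0 := hli.ne_zero (⟨3, by omega⟩ : Fin (m + 3))
  -- Since `x²y = 0`, the coefficient of `x²` in `yw` vanishes: compare `x²(yw)` with `(x²y)w`.
  have coef : ∀ (w : A) (c d : ℂ), e (m + 1) * w = c • e 2 + d • e (m + 2) → c = 0 := by
    intro w c d h
    have key : e 1 * (e 1 * (e (m + 1) * w)) = 0 := by
      rw [← mul_assoc (e 1) (e (m + 1)), h3, ← mul_assoc, h4, zero_mul]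
    rw [h, mul_add, mul_smul_comm, mul_smul_comm, h4, e3, smul_zero, add_zero, mul_smul_comm,
      e4] at key
    exact (smul_eq_zero.1 key).resolve_right e4_ne
  obtain rfl : a1 = 0 := coef _ _ _ ha
  obtain rfl : a3 = 0 := coef _ _ _ hb
  rw [zero_smul, zero_add] at ha hb
  have zx : e (m + 2) * e 1 = 0 := by
    rw [← h3, mul_assoc, ha, mul_smul_comm, h4, smul_zero]
  have zy : e (m + 2) * e (m + 1) = 0 := by
    rw [← h3, mul_assoc, hb, mul_smul_comm, h4, smul_zero]
  have yz : e (m + 1) * e (m + 2) = 0 := by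
    conv_lhs => rw [← h3]
    rw [← mul_assoc, ha, smul_mul_assoc, zy, smul_zero]
  have zz : e (m + 2) * e (m + 2) = 0 := by
    conv_lhs => rw [← h3]
    rw [mul_assoc, h3, yz, mul_zero]
  have ze : ∀ i, 1 ≤ i → i ≤ m → e (m + 2) * e i = 0 := by
    intro i hi him
    obtain rfl | ⟨j, rfl⟩ : i = 1 ∨ ∃ j, i = j + 1 + 1 := by
      obtain h | h := eq_or_lt_of_le hi
      · exact .inl h.symm
      · exact .inr ⟨i - 2, by omega⟩
    · exact zx
    · rw [← h1 (j + 1) (by omega) (by omega), ← mul_assoc, zx, zero_mul]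
  have ye : ∀ i, 2 ≤ i → i ≤ m → e (m + 1) * e i = 0 := by
    intro i hi him
    obtain ⟨j, rfl⟩ : ∃ j, i = j + 1 := ⟨i - 1, by omega⟩
    rw [← h1 j (by omega) (by omega), ← mul_assoc, ha, smul_mul_assoc, ze j (by omega) (by omega),
      smul_zero]
  -- The powers `xᵏ`, for all `k ≥ 1`.
  let E : ℕ → A := fun k => if k ≤ m then e k else 0
  have E_le : ∀ k, k ≤ m → E k = e k := fun k hk => if_pos hk
  have E_gt : ∀ k, m < k → E k = 0 := fun k hk => if_neg (by omega)
  have xE : ∀ k, 1 ≤ k → e 1 * E k = E (k + 1) := by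
    intro k hk
    obtain h | rfl | h := lt_trichotomy k m
    · rw [E_le k h.le, E_le (k + 1) h, h1 k hk (by omega)]
    · rw [E_le k le_rfl, E_gt (k + 1) (by omega), h2]
    · rw [E_gt k h, E_gt (k + 1) (by omega), mul_zero]
  have E1 : E 1 = e 1 := E_le 1 (by omega)
  have E2 : E 2 = e 2 := E_le 2 (by omega)
  have Ex : ∀ k, 1 ≤ k → E k * e 1 = E (k + 1) := by
    intro k hk
    induction k, hk using Nat.le_induction with
    | base => rw [E1, e2, E2]
    | succ k hk ih => rw [← xE k hk, mul_assoc, ih, xE (k + 1) (by omega)]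
  have Ey : ∀ k, 2 ≤ k → E k * e (m + 1) = 0 := by
    intro k hk
    induction k, hk using Nat.le_induction with
    | base => rw [E2, ← e2, mul_assoc, h3, h4]
    | succ k hk ih => rw [← xE k (by omega), mul_assoc, ih, mul_zero]
  have prod_mem : ∀ (a : A) (l : List A), 2 ≤ l.length →
      a ∈ Submodule.span ℂ {e 1, e (m + 1)} →
      (∀ x ∈ l, x ∈ Submodule.span ℂ {e 1, e (m + 1)}) →
      l.foldl (· * ·) a ∈ Submodule.span ℂ {E (l.length + 1)} := by
    rintro a (_ | ⟨b, _ | ⟨c, l⟩⟩) hlen hmem hl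
    · simp at hlen
    · simp at hlen
    have hb' := hl b (by simp)
    have hc' := hl c (by simp)
    obtain ⟨p, q, rfl⟩ := Submodule.mem_span_pair.1 hmem
    obtain ⟨r, s, rfl⟩ := Submodule.mem_span_pair.1 hb'
    obtain ⟨t, u, rfl⟩ := Submodule.mem_span_pair.1 hc'
    have e2x : e 2 * e 1 = E 3 := by rw [← E2, Ex 2 (by omega)]
    have e2y : e 2 * e (m + 1) = 0 := by rw [← E2, Ey 2 le_rfl]
    have := foldl_mul_mem_span_singleton E (e 1) (e (m + 1)) (fun k hk => Ex k (by omega)) Ey l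
      (fun x hx => hl x (by simp [hx])) 3 (by omega)
      ((p • e 1 + q • e (m + 1)) * (r • e 1 + s • e (m + 1)) * (t • e 1 + u • e (m + 1))) (by
        refine Submodule.mem_span_singleton.2 ⟨t * (r * p), ?_⟩
        simp [mul_add, add_mul, smul_mul_assoc, mul_smul_comm, mul_smul, e2, h3, ha, hb, e2x, e2y,
          zx, zy])
    simp only [List.foldl_cons, List.length_cons]
    rwa [show l.length + 1 + 1 + 1 = 3 + l.length by omega]
  refine ⟨rfl, rfl, zx, zy, yz, zz, ye, fun i hi => ze i (by omega), ?_, ?_⟩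
  · rintro k a l rfl hk hmem hl
    have h := prod_mem a l (by omega) hmem hl
    refine ⟨fun hle => ?_, fun hlt => ?_⟩
    · rwa [E_le _ hle] at h
    · simpa [E_gt _ hlt] using h
  · intro hmem
    refine hli.notMem_span_image (s := {i : Fin (m + 3) | i.1 + 1 ≤ m})
      (x := ⟨m + 2, by omega⟩) (by simp) (Submodule.span_le.2 ?_ hmem)
    rintro _ ⟨a, l, hlen, hmem', hl, rfl⟩
    refine Submodule.span_le.2 ?_ (prod_mem a l hlen hmem' hl)
    rintro _ rfl
    by_cases h : l.length + 1 ≤ m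
    · rw [E_le _ h]
      exact Submodule.subset_span ⟨⟨l.length, by omega⟩, h, rfl⟩
    · rw [E_gt _ (by omega)]
      exact Submodule.zero_mem _
end

section
/- Let n > 6 and let A be a non-unital associative ℂ-algebra with basis e₁, …, eₙ such that e₁·eᵢ = e_{i+1} for 1 ≤ i ≤ n−4, e₁·e_{n−3} = 0, e₁·e_{n−2} = e_{n−1}, e₁·e_{n−1} = 0, e₁·eₙ = 0, and suppose eₙ·e₁ = a e₂ + b e_{n−2} and eₙ·eₙ = a′e₂ + b′e_{n−2} for scalars a, b, a′, b′ ∈ ℂ. Then a = b = a′ = b′ = 0, i.e. eₙ·e₁ = eₙ·eₙ = 0; consequently the non-unital subalgebra of A generated by {e₁, eₙ} equals span{e₁, e₂, …, e_{n−3}, eₙ} and does not contain e_{n−2}. In particular A is not generated as an algebra by {e₁, eₙ}. -/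
/-!
Left multiplication by `e 1` kills `e n`, hence by associativity it kills `e n * e 1` and
`e n * e n`. It is injective on the plane spanned by `e 2` and `e (n - 2)`, sending these vectors to
the independent vectors `e 3` and `e (n - 1)`, so both products vanish.

For the subalgebra, let `S` be the span of `e 1, …, e (n - 3), e n`. It lies in the subalgebra
because `e (i + 1) = e 1 * e i`. Conversely `e 1 * S ⊆ S`, and `e n * S = 0` because
`e n * e (i + 1) = (e n * e 1) * e i`; therefore every element of the subalgebra lies in `S`
and multiplies `S` into `S` from the left. Linear independence gives `e (n - 2) ∉ S`.
-/

/-- A subspace containing the generators and stable under left multiplication by them contains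
the non-unital subalgebra they generate. -/
lemma adjoin_le_of_left_stable {A : Type*} [NonUnitalRing A]
    [Module ℂ A] [SMulCommClass ℂ A A] [IsScalarTower ℂ A A] (G : Set A) (S : Submodule ℂ A)
    (hG : ∀ g ∈ G, g ∈ S) (hS : ∀ g ∈ G, ∀ s ∈ S, g * s ∈ S) :
    (NonUnitalAlgebra.adjoin ℂ G).toSubmodule ≤ S := by
  -- Stability of `S` under `x * ·` is carried along with membership to make products inductive.
  have key : ∀ x ∈ NonUnitalAlgebra.adjoin ℂ G, x ∈ S ∧ ∀ s ∈ S, x * s ∈ S := by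
    intro x hx
    induction hx using NonUnitalAlgebra.adjoin_induction with
    | mem x hx => exact ⟨hG x hx, hS x hx⟩
    | add x y _ _ hx hy =>
      refine ⟨S.add_mem hx.1 hy.1, fun s hs => ?_⟩
      rw [add_mul]
      exact S.add_mem (hx.2 s hs) (hy.2 s hs)
    | zero => exact ⟨S.zero_mem, fun s _ => by rw [zero_mul]; exact S.zero_mem⟩
    | mul x y _ _ hx hy =>
      refine ⟨hx.2 y hy.1, fun s hs => ?_⟩
      rw [mul_assoc]
      exact hx.2 _ (hy.2 s hs)
    | smul c x _ hx =>
      refine ⟨S.smul_mem c hx.1, fun s hs => ?_⟩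
      rw [smul_mul_assoc]
      exact S.smul_mem c (hx.2 s hs)
  exact fun x hx => (key x hx).1


/-- **case `r₁ ≥ 2`, `r₂ = 1`.** Let `n > 6` and let `A` be a non-unital
associative `ℂ`-algebra with basis `e₁, …, eₙ` adapted to `L_{e₁}` (Jordan blocks of sizes
`n-3, 2, 1`), and suppose `eₙe₁ = a e₂ + b e_{n-2}` and `eₙeₙ = a′e₂ + b′e_{n-2}`.
Then `a = b = a′ = b′ = 0`, i.e. `eₙe₁ = eₙeₙ = 0`; the non-unital subalgebra generated by
`{e₁, eₙ}` equals `span{e₁, …, e_{n-3}, eₙ}`, does not contain `e_{n-2}`, and in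
particular is not all of `A`. -/
theorem case_r1_ge_two_r2_one (n : ℕ) (hn : 6 < n) {A : Type*} [NonUnitalRing A]
    [Module ℂ A] [SMulCommClass ℂ A A] [IsScalarTower ℂ A A] (e : ℕ → A)
    (hli : LinearIndependent ℂ (fun i : Fin n => e (i.1 + 1)))
    (hsp : Submodule.span ℂ (Set.range fun i : Fin n => e (i.1 + 1)) = ⊤)
    (h1 : ∀ i : ℕ, 1 ≤ i → i ≤ n - 4 → e 1 * e i = e (i + 1))
    (h2 : e 1 * e (n - 3) = 0)
    (h3 : e 1 * e (n - 2) = e (n - 1))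
    (h4 : e 1 * e (n - 1) = 0)
    (h5 : e 1 * e n = 0)
    (a b a' b' : ℂ)
    (ha : e n * e 1 = a • e 2 + b • e (n - 2))
    (hb : e n * e n = a' • e 2 + b' • e (n - 2)) :
    a = 0 ∧ b = 0 ∧ a' = 0 ∧ b' = 0 ∧
    e n * e 1 = 0 ∧ e n * e n = 0 ∧
    (NonUnitalAlgebra.adjoin ℂ ({e 1, e n} : Set A)).toSubmodule =
      Submodule.span ℂ ({e n} ∪ (fun i : ℕ => e i) '' {i : ℕ | 1 ≤ i ∧ i ≤ n - 3}) ∧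
    e (n - 2) ∉ NonUnitalAlgebra.adjoin ℂ ({e 1, e n} : Set A) ∧
    NonUnitalAlgebra.adjoin ℂ ({e 1, e n} : Set A) ≠ ⊤ := by
  -- `e 1` annihilates `e n * x`, while it maps `c • e 2 + d • e (n - 2)` to an
  -- independent combination.
  have coef : ∀ (x : A) (c d : ℂ), e n * x = c • e 2 + d • e (n - 2) → c = 0 ∧ d = 0 := by
    intro x c d h
    have h0 : c • e 3 + d • e (n - 1) = 0 := by
      have := congrArg (fun y => e 1 * y) h
      simp only [← mul_assoc, h5, zero_mul, mul_add, mul_smul_comm, h3,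
        h1 2 (by omega) (by omega)] at this
      exact this.symm
    have hp : LinearIndependent ℂ ![e 3, e (n - 1)] := by
      have := hli.comp ![(⟨2, by omega⟩ : Fin n), ⟨n - 2, by omega⟩] (by
        intro i j
        fin_cases i <;> fin_cases j <;> simp <;> omega)
      convert this using 1
      ext i
      fin_cases i
      · rfl
      · simp [show n - 2 + 1 = n - 1 by omega]
    exact LinearIndependent.pair_iff.1 hp c d h0
  obtain ⟨rfl, rfl⟩ := coef _ _ _ ha
  obtain ⟨rfl, rfl⟩ := coef _ _ _ hb
  simp only [zero_smul, add_zero] at ha hb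
  set S := Submodule.span ℂ ({e n} ∪ (fun i : ℕ => e i) '' {i : ℕ | 1 ≤ i ∧ i ≤ n - 3}) with hS
  have hnS : e n ∈ S := Submodule.subset_span (Or.inl rfl)
  have hiS : ∀ i, 1 ≤ i → i ≤ n - 3 → e i ∈ S := fun i hi hi' =>
    Submodule.subset_span (Or.inr ⟨i, ⟨hi, hi'⟩, rfl⟩)
  have hEq : (NonUnitalAlgebra.adjoin ℂ ({e 1, e n} : Set A)).toSubmodule = S := by
    apply le_antisymm
    · apply adjoin_le_of_left_stable
      · rintro g (rfl | rfl)
        · exact hiS 1 le_rfl (by omega)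
        · exact hnS
      · intro g hg s hs
        induction hs using Submodule.span_induction with
        | zero => rw [mul_zero]; exact S.zero_mem
        | add x y _ _ hx hy => rw [mul_add]; exact S.add_mem hx hy
        | smul c x _ hx => rw [mul_smul_comm]; exact S.smul_mem c hx
        | mem x hx =>
          rcases hg with rfl | rfl
          · rcases hx with rfl | ⟨i, ⟨hi, hi'⟩, rfl⟩
            · rw [h5]; exact S.zero_mem
            · rcases hi'.eq_or_lt with rfl | hlt
              · change e 1 * e (n - 3) ∈ S
                rw [h2]; exact S.zero_mem
              · change e 1 * e i ∈ S
                rw [h1 i hi (by omega)]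
                exact hiS _ (by omega) (by omega)
          · have h0 : e n * x = 0 := by
              rcases hx with rfl | ⟨i, ⟨hi, hi'⟩, rfl⟩
              · exact hb
              · change e n * e i = 0
                rcases hi.eq_or_lt with rfl | hlt
                · exact ha
                · obtain ⟨j, rfl⟩ : ∃ j, i = j + 1 := ⟨i - 1, by omega⟩
                  rw [← h1 j (by omega) (by omega), ← mul_assoc, ha, zero_mul]
            rw [h0]; exact S.zero_mem
    · rw [hS, Submodule.span_le]
      rintro x (rfl | ⟨i, ⟨hi, hi'⟩, rfl⟩)
      · exact NonUnitalAlgebra.subset_adjoin ℂ (Or.inr rfl)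
      · change e i ∈ NonUnitalAlgebra.adjoin ℂ ({e 1, e n} : Set A)
        have h1A : e 1 ∈ NonUnitalAlgebra.adjoin ℂ ({e 1, e n} : Set A) :=
          NonUnitalAlgebra.subset_adjoin ℂ (Or.inl rfl)
        induction i, hi using Nat.le_induction with
        | base => exact h1A
        | succ i hi ih =>
          rw [← h1 i hi (by omega)]
          exact mul_mem h1A (ih (by omega))
  have hnotS : e (n - 2) ∉ S := by
    intro hmem
    -- `e (n - 2)` is the family member with index `n - 3`, since the family is shifted by one.
    have hnot := hli.notMem_span_image (s := {i : Fin n | i.1 ≠ n - 3})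
      (x := ⟨n - 3, by omega⟩) (by simp)
    apply hnot
    rw [show n - 3 + 1 = n - 2 by omega]
    refine Submodule.span_mono ?_ hmem
    rintro x (rfl | ⟨i, ⟨hi, hi'⟩, rfl⟩)
    · refine ⟨⟨n - 1, by omega⟩, ?_, ?_⟩
      · simp only [Set.mem_setOf_eq]; omega
      · simp [show n - 1 + 1 = n by omega]
    · refine ⟨⟨i - 1, by omega⟩, ?_, ?_⟩
      · simp only [Set.mem_setOf_eq]; omega
      · simp [show i - 1 + 1 = i by omega]
  have hnot : e (n - 2) ∉ NonUnitalAlgebra.adjoin ℂ ({e 1, e n} : Set A) := by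
    intro h
    apply hnotS
    rw [← hEq]
    exact h
  refine ⟨rfl, rfl, rfl, rfl, ha, hb, hEq, hnot, fun htop => hnot ?_⟩
  rw [htop]
  trivial
end
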